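/- Theorem 2.4 (generating-function part; active-regime linearity for FA-1f in dimension d≥2). Consider the FA-1f model on Λ_N^d={1,…,N}^d at density ρ∈(0,1) with boundary condition of dimension c∈{0,1,…,d−1} (a fixed c-dimensional hyperplane of N^c external boundary sites adjacent to one face of the cube is empty, all other external boundary sites are filled). Let 𝔸=ν(c_j) for an interior site j, and let φ^{(N)}(λ) be defined by the variational formula for this d-dimensional model. Then there exists α₀<0 such that for every α>α₀: limsup_{N→∞} N^{−c}·φ^{(N)}(α/N^{d−c}) = 𝔸·α. -/

import Mathlib

/-!
The quantity to control is `X = ν(g² 𝓗) - 𝔸 N^d` for `g = √f` with `ν(g²) = 1`, in terms of the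
Dirichlet form `𝒟 = 𝒟_N(g)`. The estimate `core_est` says that, for every `ε > 0`, there is `A`
such that for all `τ > 0`

* `X ≤ ε N^d + A (N^(d-1) + τ N^d + 𝒟/τ)`,
* `-X ≤ ε N^d + A (N^(d-1) + τ N^d + 𝒟/τ) + C₁ N^(d-c) 𝒟`, with `C₁` independent of `ε`.

For `λ = α / N^(d-c)` and `μ = e^λ - 1`, the choice `τ ≈ 4 A |μ|` makes the terms `𝒟/τ` absorbable
in `-e^λ 𝒟`, and so is `|μ| C₁ N^(d-c) 𝒟` when `α < 0` and `|α| C₁` is at most `1/4`. This yields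
`φ(λ) ≤ μ 𝔸 N^d + o(N^c)`, and the test function `f = 1` yields the reverse inequality
(`phi_bound`); dividing by `N^c` gives convergence to `𝔸 α` (`phi_tendsto`).

The estimate `core_est` rests on local equilibrium. If a weight does not depend on `η_x` and is
supported where `x` may flip, then `η_x` has weighted mean `ρ` under `g² ν`, up to
`τ + 𝒟_x / τ` (`flip_est`). To replace `η_y` by `ρ` without knowing that `y` may flip, one looks at
the first empty site of a window of `ℓ + 1` successive neighbors starting at `y`: the masses of
its positions decay geometrically with ratio `ρ`, because an empty site can be moved by one step
by two flips, so the position `0` has the mass `1 - ρ` that it has under `ν` (`local_est`). The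
only obstruction is a window that is entirely occupied, and this matters only for the lower bound
on `X`. Such a window is handled by continuing it along a path to the empty part of the boundary,
whose last site is never blocked (`full_est`): the mass is exponentially small in `ℓ`, up to the
sum of the local Dirichlet forms along the path. The path from `y` goes up in direction `e_1` and
then brings the coordinates of index `> c` down to the empty boundary hyperplane, so each site is
used by at most `N^(d-c)` paths (`path_sum`), which produces the term `C₁ N^(d-c) 𝒟`.
-/

open Finset Filter

open scoped Classical

/-- A configuration on the cube `Λ_N^d = {1,…,N}^d` (0-indexed coordinates). -/
abbrev ConfigD (d N : ℕ) := (Fin d → Fin N) → Bool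

/-- Bernoulli(ρ) product weight of a configuration on the cube. -/
noncomputable def bernD (ρ : ℝ) {d N : ℕ} (η : ConfigD d N) : ℝ :=
  ∏ i : Fin d → Fin N, (if η i then ρ else 1 - ρ)

/-- Expectation under the Bernoulli(ρ) product measure on the cube. -/
noncomputable def expectD (ρ : ℝ) {d N : ℕ} (f : ConfigD d N → ℝ) : ℝ :=
  ∑ η : ConfigD d N, bernD ρ η * f η

/-- The configuration flipped at the site `i`. -/
def flipD {d N : ℕ} (η : ConfigD d N) (i : Fin d → Fin N) : ConfigD d N :=
  Function.update η i (!η i)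

/-- Occupation of the neighbor `i + e_j` of the site `i`, for the boundary
condition of dimension `c`: the empty boundary hyperplane consists of the `N^c`
external sites lying just past the face in the direction `+e_1` (0-indexed
coordinate `0`) whose coordinates of index `> c` all vanish; all other external
sites are filled. -/
noncomputable def nbrP {d N : ℕ} (c : ℕ) (η : ConfigD d N) (i : Fin d → Fin N)
    (j : Fin d) : ℝ :=
  if h : (i j).1 + 1 < N then
    (if η (Function.update i j ⟨(i j).1 + 1, h⟩) then 1 else 0)
  else if j.1 = 0 ∧ ∀ k : Fin d, c < k.1 → (i k).1 = 0 then 0 else 1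

/-- Occupation of the neighbor `i − e_j` of the site `i`; the external sites on
this side are all filled. -/
noncomputable def nbrM {d N : ℕ} (η : ConfigD d N) (i : Fin d → Fin N)
    (j : Fin d) : ℝ :=
  if 0 < (i j).1 then
    (if η (Function.update i j ⟨(i j).1 - 1,
        lt_of_le_of_lt (Nat.sub_le _ _) (i j).isLt⟩) then 1 else 0)
  else 1

/-- The FA-1f constraint on the cube: `r_i(η) = 1 − ∏_{j=1}^d η_{i+e_j}η_{i−e_j}`,
external neighbors taking their fixed boundary values. -/
noncomputable def constrD {d N : ℕ} (c : ℕ) (η : ConfigD d N)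
    (i : Fin d → Fin N) : ℝ :=
  1 - ∏ j : Fin d, (nbrP c η i j * nbrM η i j)

/-- The FA-1f jump rate on the cube. -/
noncomputable def crateD (ρ : ℝ) {d N : ℕ} (c : ℕ) (η : ConfigD d N)
    (i : Fin d → Fin N) : ℝ :=
  constrD c η i * (if η i then 1 - ρ else ρ)

/-- The escape rate `𝓗(η) = Σ_{i∈Λ_N^d} c_i(η)`. -/
noncomputable def escD (ρ : ℝ) {d N : ℕ} (c : ℕ) (η : ConfigD d N) : ℝ :=
  ∑ i : Fin d → Fin N, crateD ρ c η i

/-- The Dirichlet form of FA-1f on the cube. -/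
noncomputable def dirichletD (ρ : ℝ) {d N : ℕ} (c : ℕ) (g : ConfigD d N → ℝ) : ℝ :=
  ∑ i : Fin d → Fin N, expectD ρ (fun η => crateD ρ c η i * (g (flipD η i) - g η) ^ 2)

/-- The rescaled cumulant generating function `φ^{(N)}(λ)` of the activity for the
`d`-dimensional FA-1f model with boundary condition of dimension `c`, via the
Donsker–Varadhan variational formula. -/
noncomputable def phiD (ρ : ℝ) (d N c : ℕ) (lam : ℝ) : ℝ :=
  sSup { x | ∃ f : ConfigD d N → ℝ, (∀ η, 0 ≤ f η) ∧ expectD ρ f = 1 ∧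
    x = (Real.exp lam - 1) * expectD ρ (fun η => f η * escD ρ c η)
        - Real.exp lam * dirichletD ρ c (fun η => Real.sqrt (f η)) }

/-! ### Flips, rates and the single-flip estimate -/

/-- The occupation number `η_x` as a real number. -/
noncomputable def occ {d N : ℕ} (η : ConfigD d N) (x : Fin d → Fin N) : ℝ :=
  if η x then 1 else 0

/-- The contribution of flips at the site `x` to the Dirichlet form. -/
noncomputable def dsite (ρ : ℝ) {d N : ℕ} (c : ℕ) (g : ConfigD d N → ℝ)
    (x : Fin d → Fin N) : ℝ :=
  expectD ρ (fun η => crateD ρ c η x * (g (flipD η x) - g η) ^ 2)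

section Basics

variable {ρ : ℝ} {d N : ℕ}

lemma occ_nonneg (η : ConfigD d N) (x : Fin d → Fin N) : 0 ≤ occ η x := by
  unfold occ; split_ifs <;> norm_num

lemma occ_le_one (η : ConfigD d N) (x : Fin d → Fin N) : occ η x ≤ 1 := by
  unfold occ; split_ifs <;> norm_num

lemma flipD_flipD (η : ConfigD d N) (x : Fin d → Fin N) : flipD (flipD η x) x = η := by
  simp [flipD]

lemma flipD_same (η : ConfigD d N) (x : Fin d → Fin N) : flipD η x x = !η x := by
  simp [flipD]

lemma flipD_of_ne (η : ConfigD d N) {x y : Fin d → Fin N} (h : y ≠ x) :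
    flipD η x y = η y := by
  simp [flipD, h]

lemma occ_flip_of_ne (η : ConfigD d N) {x y : Fin d → Fin N} (h : y ≠ x) :
    occ (flipD η x) y = occ η y := by
  simp [occ, flipD_of_ne η h]

lemma occ_flip_same (η : ConfigD d N) (x : Fin d → Fin N) :
    occ (flipD η x) x = 1 - occ η x := by
  unfold occ; rw [flipD_same]; cases η x <;> simp

lemma bernD_nonneg (h0 : 0 < ρ) (h1 : ρ < 1) (η : ConfigD d N) : 0 ≤ bernD ρ η := by
  apply Finset.prod_nonneg; intro i _; split_ifs <;> linarith

lemma sum_bernD : ∑ η : ConfigD d N, bernD ρ η = 1 := by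
  unfold bernD
  have h := Finset.prod_univ_sum (fun _ : Fin d → Fin N => (Finset.univ : Finset Bool))
    (fun _ b => if b then ρ else 1 - ρ)
  rw [Fintype.piFinset_univ] at h
  rw [← h]
  simp

lemma expectD_one : expectD ρ (fun _ : ConfigD d N => (1 : ℝ)) = 1 := by
  simp [expectD, sum_bernD]

lemma expectD_add (f h : ConfigD d N → ℝ) :
    expectD ρ (fun η => f η + h η) = expectD ρ f + expectD ρ h := by
  simp [expectD, mul_add, Finset.sum_add_distrib]

lemma expectD_sub (f h : ConfigD d N → ℝ) :
    expectD ρ (fun η => f η - h η) = expectD ρ f - expectD ρ h := by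
  simp [expectD, mul_sub, Finset.sum_sub_distrib]

lemma expectD_smul (a : ℝ) (f : ConfigD d N → ℝ) :
    expectD ρ (fun η => a * f η) = a * expectD ρ f := by
  simp only [expectD, Finset.mul_sum]
  exact Finset.sum_congr rfl fun η _ => by ring

lemma expectD_sum {ι : Type*} (s : Finset ι) (f : ι → ConfigD d N → ℝ) :
    expectD ρ (fun η => ∑ i ∈ s, f i η) = ∑ i ∈ s, expectD ρ (f i) := by
  simp only [expectD, Finset.mul_sum]
  exact Finset.sum_comm

lemma expectD_mono (h0 : 0 < ρ) (h1 : ρ < 1) {f h : ConfigD d N → ℝ}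
    (hfh : ∀ η, f η ≤ h η) : expectD ρ f ≤ expectD ρ h :=
  Finset.sum_le_sum fun η _ => mul_le_mul_of_nonneg_left (hfh η) (bernD_nonneg h0 h1 η)

lemma expectD_nonneg (h0 : 0 < ρ) (h1 : ρ < 1) {f : ConfigD d N → ℝ}
    (hf : ∀ η, 0 ≤ f η) : 0 ≤ expectD ρ f :=
  Finset.sum_nonneg fun η _ => mul_nonneg (bernD_nonneg h0 h1 η) (hf η)

lemma nbrP_mem (c : ℕ) (η : ConfigD d N) (i : Fin d → Fin N) (j : Fin d) :
    0 ≤ nbrP c η i j ∧ nbrP c η i j ≤ 1 := by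
  unfold nbrP; split_ifs <;> norm_num

lemma nbrM_mem (η : ConfigD d N) (i : Fin d → Fin N) (j : Fin d) :
    0 ≤ nbrM η i j ∧ nbrM η i j ≤ 1 := by
  unfold nbrM; split_ifs <;> norm_num

lemma constrD_nonneg (c : ℕ) (η : ConfigD d N) (i : Fin d → Fin N) :
    0 ≤ constrD c η i := by
  have : ∏ j : Fin d, (nbrP c η i j * nbrM η i j) ≤ 1 :=
    Finset.prod_le_one
      (fun j _ => mul_nonneg (nbrP_mem c η i j).1 (nbrM_mem η i j).1)
      (fun j _ => mul_le_one₀ (nbrP_mem c η i j).2 (nbrM_mem η i j).1 (nbrM_mem η i j).2)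
  unfold constrD; linarith

lemma constrD_le_one (c : ℕ) (η : ConfigD d N) (i : Fin d → Fin N) :
    constrD c η i ≤ 1 := by
  have : 0 ≤ ∏ j : Fin d, (nbrP c η i j * nbrM η i j) :=
    Finset.prod_nonneg
      (fun j _ => mul_nonneg (nbrP_mem c η i j).1 (nbrM_mem η i j).1)
  unfold constrD; linarith

lemma prod_nbr_le (c : ℕ) (η : ConfigD d N) (i : Fin d → Fin N) (j : Fin d) :
    1 - nbrP c η i j * nbrM η i j ≤ constrD c η i := by
  have hf : ∀ k, 0 ≤ nbrP c η i k * nbrM η i k :=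
    fun k => mul_nonneg (nbrP_mem c η i k).1 (nbrM_mem η i k).1
  have : ∏ k : Fin d, (nbrP c η i k * nbrM η i k) ≤ nbrP c η i j * nbrM η i j := by
    rw [← Finset.mul_prod_erase _ _ (Finset.mem_univ j)]
    refine mul_le_of_le_one_right (hf j) (Finset.prod_le_one (fun k _ => hf k) fun k _ => ?_)
    exact mul_le_one₀ (nbrP_mem c η i k).2 (nbrM_mem η i k).1 (nbrM_mem η i k).2
  unfold constrD; linarith

lemma one_sub_nbrP_le (c : ℕ) (η : ConfigD d N) (i : Fin d → Fin N) (j : Fin d) :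
    1 - nbrP c η i j ≤ constrD c η i :=
  le_trans (by
    have := mul_le_of_le_one_right (nbrP_mem c η i j).1 (nbrM_mem η i j).2
    linarith) (prod_nbr_le c η i j)

lemma one_sub_nbrM_le (c : ℕ) (η : ConfigD d N) (i : Fin d → Fin N) (j : Fin d) :
    1 - nbrM η i j ≤ constrD c η i :=
  le_trans (by
    have := mul_le_of_le_one_left (nbrM_mem η i j).1 (nbrP_mem c η i j).2
    linarith) (prod_nbr_le c η i j)

lemma crateD_nonneg (h0 : 0 < ρ) (h1 : ρ < 1) (c : ℕ) (η : ConfigD d N)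
    (i : Fin d → Fin N) : 0 ≤ crateD ρ c η i :=
  mul_nonneg (constrD_nonneg c η i) (by split_ifs <;> linarith)

lemma crateD_le_one (h0 : 0 < ρ) (h1 : ρ < 1) (c : ℕ) (η : ConfigD d N)
    (i : Fin d → Fin N) : crateD ρ c η i ≤ 1 :=
  mul_le_one₀ (constrD_le_one c η i) (by split_ifs <;> linarith) (by split_ifs <;> linarith)

lemma dsite_nonneg (h0 : 0 < ρ) (h1 : ρ < 1) (c : ℕ) (g : ConfigD d N → ℝ)
    (x : Fin d → Fin N) : 0 ≤ dsite ρ c g x :=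
  expectD_nonneg h0 h1 fun η => mul_nonneg (crateD_nonneg h0 h1 c η x) (sq_nonneg _)

lemma dirichletD_eq (c : ℕ) (g : ConfigD d N → ℝ) :
    dirichletD ρ c g = ∑ x, dsite ρ c g x := rfl

/-- Summation over configurations is invariant under the flip at `x`. -/
lemma sum_flip (x : Fin d → Fin N) (F : ConfigD d N → ℝ) :
    ∑ η, F (flipD η x) = ∑ η, F η :=
  Fintype.sum_bijective (fun η => flipD η x)
    (Function.Involutive.bijective fun η => flipD_flipD η x) _ _ fun _ => rfl

/-- Detailed balance for the unconstrained single-site dynamics. -/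
lemma bernD_flip (η : ConfigD d N) (x : Fin d → Fin N) :
    bernD ρ (flipD η x) * (if flipD η x x then 1 - ρ else ρ)
      = bernD ρ η * (if η x then 1 - ρ else ρ) := by
  unfold bernD
  rw [← Finset.mul_prod_erase _ _ (Finset.mem_univ x),
    ← Finset.mul_prod_erase (a := x) _ (fun i => if η i then ρ else 1 - ρ) (Finset.mem_univ x)]
  have : ∏ i ∈ Finset.univ.erase x, (if flipD η x i then ρ else 1 - ρ)
      = ∏ i ∈ Finset.univ.erase x, (if η i then ρ else 1 - ρ) :=
    Finset.prod_congr rfl fun i hi => by rw [flipD_of_ne η (Finset.ne_of_mem_erase hi)]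
  rw [this, flipD_same]
  cases η x <;> simp <;> ring

/-- The basic single-flip estimate: if the weight `u` does not depend on `η_x` and is supported
where `x` may flip, then under `g² ν` the variable `η_x` has `u`-weighted mean `ρ`, up to an error
controlled by the local Dirichlet form. -/
lemma flip_est (h0 : 0 < ρ) (h1 : ρ < 1) (c : ℕ) (g u : ConfigD d N → ℝ)
    (x : Fin d → Fin N) (hu0 : ∀ η, 0 ≤ u η) (huc : ∀ η, u η ≤ constrD c η x)
    (huf : ∀ η, u (flipD η x) = u η) {τ : ℝ} (hτ : 0 < τ) :
    |expectD ρ (fun η => g η ^ 2 * (u η * (occ η x - ρ)))|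
      ≤ τ * expectD ρ (fun η => g η ^ 2 * u η) + (1 / τ) * dsite ρ c g x := by
  set q : ConfigD d N → ℝ := fun η => if η x then 1 - ρ else ρ with hq
  set s : ConfigD d N → ℝ := fun η => if η x then 1 else -1 with hs
  have hq0 : ∀ η, 0 ≤ q η := fun η => by simp only [hq]; split_ifs <;> linarith
  have hq1 : ∀ η, q η ≤ 1 := fun η => by simp only [hq]; split_ifs <;> linarith
  have hsf : ∀ η, s (flipD η x) = - s η := fun η => by
    simp only [hs, flipD_same]; cases η x <;> simp
  have hos : ∀ η, occ η x - ρ = q η * s η := fun η => by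
    simp only [hs, hq, occ]; cases η x <;> simp
  have hbq : ∀ η, bernD ρ (flipD η x) * q (flipD η x) = bernD ρ η * q η :=
    fun η => bernD_flip η x
  have hb := fun η : ConfigD d N => bernD_nonneg h0 h1 η
  -- the expectation is antisymmetrised under the flip, using detailed balance
  have hE : expectD ρ (fun η => g η ^ 2 * (u η * (occ η x - ρ)))
      = ∑ η, bernD ρ η * q η * (u η * s η * ((g η ^ 2 - g (flipD η x) ^ 2) / 2)) := by
    have e1 : expectD ρ (fun η => g η ^ 2 * (u η * (occ η x - ρ)))
        = ∑ η, bernD ρ η * q η * (u η * s η * g η ^ 2) := by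
      unfold expectD
      exact Finset.sum_congr rfl fun η _ => by simp only [hos]; ring
    have e2 : ∑ η, bernD ρ η * q η * (u η * s η * g η ^ 2)
        = ∑ η, bernD ρ η * q η * (u η * (- s η) * g (flipD η x) ^ 2) := by
      rw [← sum_flip x]
      exact Finset.sum_congr rfl fun η _ => by rw [hbq, huf, hsf]
    have e3 : ∑ η, bernD ρ η * q η * (u η * s η * ((g η ^ 2 - g (flipD η x) ^ 2) / 2))
        = (∑ η, bernD ρ η * q η * (u η * s η * g η ^ 2)
          + ∑ η, bernD ρ η * q η * (u η * (- s η) * g (flipD η x) ^ 2)) / 2 := by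
      rw [← Finset.sum_add_distrib, Finset.sum_div]
      exact Finset.sum_congr rfl fun η _ => by ring
    rw [e3, ← e2, e1]; ring
  have hs1 : ∀ η, |s η| = 1 := fun η => by simp only [hs]; cases η x <;> simp
  have key : ∀ a b : ℝ, |(a ^ 2 - b ^ 2) / 2| ≤ τ * ((a ^ 2 + b ^ 2) / 2)
      + (1 / τ) * (b - a) ^ 2 := by
    intro a b
    have hτ1 : τ * (1 / τ) = 1 := by field_simp
    have hi : 0 < 1 / τ := by positivity
    set t := 1 / τ
    rw [abs_le]
    constructor
    · nlinarith [mul_nonneg hτ.le (sq_nonneg (a - b)), mul_nonneg hi.le (sq_nonneg (a - b)),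
        mul_nonneg hi.le (sq_nonneg (τ * (a + b) + 2 * (a - b)))]
    · nlinarith [mul_nonneg hτ.le (sq_nonneg (a - b)), mul_nonneg hi.le (sq_nonneg (a - b)),
        mul_nonneg hi.le (sq_nonneg (τ * (a + b) - 2 * (a - b)))]
  have h2 : |expectD ρ (fun η => g η ^ 2 * (u η * (occ η x - ρ)))|
      ≤ ∑ η, (τ * (bernD ρ η * q η * (u η * ((g η ^ 2 + g (flipD η x) ^ 2) / 2)))
        + (1 / τ) * (bernD ρ η * (u η * q η * (g (flipD η x) - g η) ^ 2))) := by
    rw [hE]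
    refine (Finset.abs_sum_le_sum_abs _ _).trans (Finset.sum_le_sum fun η _ => ?_)
    rw [abs_mul, abs_mul (u η * s η), abs_mul (u η), hs1,
      abs_of_nonneg (mul_nonneg (hb η) (hq0 η)), abs_of_nonneg (hu0 η), mul_one]
    have hp : 0 ≤ bernD ρ η * q η * u η := mul_nonneg (mul_nonneg (hb η) (hq0 η)) (hu0 η)
    have := mul_le_mul_of_nonneg_left (key (g η) (g (flipD η x))) hp
    linarith
  refine h2.trans ?_
  rw [Finset.sum_add_distrib, ← Finset.mul_sum, ← Finset.mul_sum]
  have h3 : ∑ η, bernD ρ η * q η * (u η * ((g η ^ 2 + g (flipD η x) ^ 2) / 2))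
      ≤ expectD ρ (fun η => g η ^ 2 * u η) := by
    have e2 : ∑ η, bernD ρ η * q η * (u η * g (flipD η x) ^ 2)
        = ∑ η, bernD ρ η * q η * (u η * g η ^ 2) := by
      rw [← sum_flip x (fun η => bernD ρ η * q η * (u η * g η ^ 2))]
      exact Finset.sum_congr rfl fun η _ => by rw [hbq, huf]
    have e3 : ∑ η, bernD ρ η * q η * (u η * ((g η ^ 2 + g (flipD η x) ^ 2) / 2))
        = ∑ η, bernD ρ η * q η * (u η * g η ^ 2) := by
      have : ∑ η, bernD ρ η * q η * (u η * ((g η ^ 2 + g (flipD η x) ^ 2) / 2))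
        = (∑ η, bernD ρ η * q η * (u η * g η ^ 2)
          + ∑ η, bernD ρ η * q η * (u η * g (flipD η x) ^ 2)) / 2 := by
        rw [← Finset.sum_add_distrib, Finset.sum_div]
        exact Finset.sum_congr rfl fun η _ => by ring
      rw [this, e2]; ring
    rw [e3]
    refine Finset.sum_le_sum fun η _ => ?_
    have hp : 0 ≤ bernD ρ η * (g η ^ 2 * u η) :=
      mul_nonneg (hb η) (mul_nonneg (sq_nonneg _) (hu0 η))
    nlinarith [hq1 η]
  have h4 : ∑ η, bernD ρ η * (u η * q η * (g (flipD η x) - g η) ^ 2) ≤ dsite ρ c g x := by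
    refine Finset.sum_le_sum fun η _ => mul_le_mul_of_nonneg_left ?_ (hb η)
    refine mul_le_mul_of_nonneg_right ?_ (sq_nonneg _)
    exact mul_le_mul_of_nonneg_right (huc η) (hq0 η)
  have hi : 0 ≤ 1 / τ := by positivity
  exact add_le_add (mul_le_mul_of_nonneg_left h3 hτ.le) (mul_le_mul_of_nonneg_left h4 hi)

end Basics

/-! ### Estimates along chains of neighboring sites -/

/-- `v 0, …, v L` are distinct sites such that an empty site of the sequence unblocks
its predecessor and its successor. -/
structure IsChainD {d N : ℕ} (c : ℕ) (v : ℕ → Fin d → Fin N) (L : ℕ) : Prop where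
  inj : ∀ a ≤ L, ∀ b ≤ L, a ≠ b → v a ≠ v b
  adj : ∀ j < L, ∀ η : ConfigD d N, 1 - occ η (v (j + 1)) ≤ constrD c η (v j) ∧
    1 - occ η (v j) ≤ constrD c η (v (j + 1))

/-- Indicator that the first `j` sites of the sequence `v` are occupied. -/
noncomputable def full {d N : ℕ} (v : ℕ → Fin d → Fin N) (j : ℕ) (η : ConfigD d N) : ℝ :=
  ∏ l ∈ Finset.range j, occ η (v l)

/-- Indicator that the first empty site of the sequence `v` is `v j`. -/
noncomputable def firstZ {d N : ℕ} (v : ℕ → Fin d → Fin N) (j : ℕ) (η : ConfigD d N) : ℝ :=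
  full v j η * (1 - occ η (v j))

section Chains

variable {ρ : ℝ} {d N : ℕ}

lemma full_nonneg (v : ℕ → Fin d → Fin N) (j : ℕ) (η : ConfigD d N) : 0 ≤ full v j η :=
  Finset.prod_nonneg fun _ _ => occ_nonneg _ _

lemma full_le_one (v : ℕ → Fin d → Fin N) (j : ℕ) (η : ConfigD d N) : full v j η ≤ 1 :=
  Finset.prod_le_one (fun _ _ => occ_nonneg _ _) fun _ _ => occ_le_one _ _

lemma full_succ (v : ℕ → Fin d → Fin N) (j : ℕ) (η : ConfigD d N) :
    full v (j + 1) η = full v j η * occ η (v j) := Finset.prod_range_succ _ _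

lemma firstZ_nonneg (v : ℕ → Fin d → Fin N) (j : ℕ) (η : ConfigD d N) : 0 ≤ firstZ v j η :=
  mul_nonneg (full_nonneg v j η) (by linarith [occ_le_one η (v j)])

lemma firstZ_eq (v : ℕ → Fin d → Fin N) (j : ℕ) (η : ConfigD d N) :
    firstZ v j η = full v j η - full v (j + 1) η := by
  rw [full_succ, firstZ]; ring

lemma full_flip {c : ℕ} {v : ℕ → Fin d → Fin N} {L : ℕ} (hv : IsChainD c v L) {j m : ℕ}
    (hjm : j ≤ m) (hm : m ≤ L) (η : ConfigD d N) : full v j (flipD η (v m)) = full v j η := by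
  refine Finset.prod_congr rfl fun l hl => occ_flip_of_ne η ?_
  have := Finset.mem_range.1 hl
  exact hv.inj l (by omega) m hm (by omega)

/-- `g² ν`-mass of the event that `v j` is the first empty site, weighted by `w`. -/
noncomputable def pz (ρ : ℝ) {d N : ℕ} (g w : ConfigD d N → ℝ) (v : ℕ → Fin d → Fin N)
    (j : ℕ) : ℝ :=
  expectD ρ (fun η => g η ^ 2 * (w η * firstZ v j η))

/-- Moving the first empty site by one step: two single-site flips show that the masses `pz`
decay geometrically with ratio `ρ`, up to local Dirichlet form errors. -/
lemma pz_step (h0 : 0 < ρ) (h1 : ρ < 1) {c : ℕ} {v : ℕ → Fin d → Fin N} {L : ℕ}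
    (hv : IsChainD c v L) (g w : ConfigD d N → ℝ) (hw0 : ∀ η, 0 ≤ w η) (hw1 : ∀ η, w η ≤ 1)
    (hwf : ∀ m ≤ L, ∀ η, w (flipD η (v m)) = w η) {j : ℕ} (hj : j < L) {τ : ℝ} (hτ : 0 < τ) :
    |pz ρ g w v (j + 1) - ρ * pz ρ g w v j| ≤
      2 / (1 - ρ) * (τ * (pz ρ g w v j + pz ρ g w v (j + 1))
        + (1 / τ) * (dsite ρ c g (v j) + dsite ρ c g (v (j + 1)))) := by
  set u₁ : ConfigD d N → ℝ := fun η => w η * full v j η * (1 - occ η (v (j + 1))) with hu₁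
  set u₂ : ConfigD d N → ℝ := fun η => w η * full v j η * (1 - occ η (v j)) with hu₂
  have hwfull0 : ∀ η, 0 ≤ w η * full v j η := fun η => mul_nonneg (hw0 η) (full_nonneg v j η)
  have hwfull1 : ∀ η, w η * full v j η ≤ 1 := fun η =>
    mul_le_one₀ (hw1 η) (full_nonneg v j η) (full_le_one v j η)
  have hne : v (j + 1) ≠ v j := hv.inj _ (by omega) _ (by omega) (by omega)
  have e1 := flip_est h0 h1 c g u₁ (v j)
    (fun η => mul_nonneg (hwfull0 η) (by linarith [occ_le_one η (v (j + 1))]))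
    (fun η => (mul_le_of_le_one_left (by linarith [occ_le_one η (v (j + 1))])
      (hwfull1 η)).trans (hv.adj j hj η).1)
    (fun η => by
      simp only [hu₁]
      rw [hwf j hj.le, full_flip hv le_rfl hj.le, occ_flip_of_ne η hne]) hτ
  have e2 := flip_est h0 h1 c g u₂ (v (j + 1))
    (fun η => mul_nonneg (hwfull0 η) (by linarith [occ_le_one η (v j)]))
    (fun η => (mul_le_of_le_one_left (by linarith [occ_le_one η (v j)])
      (hwfull1 η)).trans (hv.adj j hj η).2)
    (fun η => by
      simp only [hu₂]
      rw [hwf (j + 1) hj, full_flip hv (Nat.le_succ j) hj, occ_flip_of_ne η hne.symm]) hτ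
  have m1 : expectD ρ (fun η => g η ^ 2 * u₁ η) ≤ pz ρ g w v j + pz ρ g w v (j + 1) := by
    rw [pz, pz, ← expectD_add]
    refine expectD_mono h0 h1 fun η => ?_
    rw [← mul_add]
    refine mul_le_mul_of_nonneg_left ?_ (sq_nonneg _)
    simp only [hu₁, firstZ, full_succ]
    have := mul_nonneg (hwfull0 η) (mul_nonneg (sub_nonneg.2 (occ_le_one η (v j)))
      (occ_nonneg η (v (j + 1))))
    nlinarith
  have m2 : expectD ρ (fun η => g η ^ 2 * u₂ η) = pz ρ g w v j := by
    simp only [hu₂, pz, firstZ, mul_assoc]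
  have id : (1 - ρ) * (pz ρ g w v (j + 1) - ρ * pz ρ g w v j)
      = expectD ρ (fun η => g η ^ 2 * (u₁ η * (occ η (v j) - ρ)))
        - ρ * expectD ρ (fun η => g η ^ 2 * (u₂ η * (occ η (v (j + 1)) - ρ))) := by
    rw [pz, pz, ← expectD_smul, ← expectD_smul, ← expectD_sub, ← expectD_smul, ← expectD_sub]
    congr 1; funext η
    simp only [hu₁, hu₂, firstZ, full_succ]
    ring
  have hp1 : 0 ≤ pz ρ g w v (j + 1) := expectD_nonneg h0 h1 fun η =>
    mul_nonneg (sq_nonneg _) (mul_nonneg (hw0 η) (firstZ_nonneg v _ η))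
  have hD1 := dsite_nonneg h0 h1 c g (v j)
  have hD2 := dsite_nonneg h0 h1 c g (v (j + 1))
  have hp0 : 0 ≤ pz ρ g w v j := expectD_nonneg h0 h1 fun η =>
    mul_nonneg (sq_nonneg _) (mul_nonneg (hw0 η) (firstZ_nonneg v _ η))
  rw [m2] at e2
  set p := pz ρ g w v j
  set p' := pz ρ g w v (j + 1)
  set D := dsite ρ c g (v j)
  set D' := dsite ρ c g (v (j + 1))
  set E₁ := expectD ρ (fun η => g η ^ 2 * (u₁ η * (occ η (v j) - ρ)))
  set E₂ := expectD ρ (fun η => g η ^ 2 * (u₂ η * (occ η (v (j + 1)) - ρ)))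
  have hpos : 0 < 1 - ρ := by linarith
  have hi : 0 < 1 / τ := by positivity
  have hB : |(1 - ρ) * (p' - ρ * p)| ≤ 2 * (τ * (p + p') + (1 / τ) * (D + D')) := by
    rw [id]
    have t1 : |E₁ - ρ * E₂| ≤ |E₁| + |E₂| := by
      refine (abs_sub _ _).trans (add_le_add le_rfl ?_)
      rw [abs_mul, abs_of_pos h0]
      exact mul_le_of_le_one_left (abs_nonneg _) h1.le
    have := mul_le_mul_of_nonneg_left m1 hτ.le
    nlinarith [mul_nonneg hτ.le hp0, mul_nonneg hτ.le hp1, mul_nonneg hi.le hD1,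
      mul_nonneg hi.le hD2]
  rw [abs_mul, abs_of_pos hpos] at hB
  rw [div_mul_eq_mul_div, le_div_iff₀ hpos]
  linarith

lemma pz_nonneg (h0 : 0 < ρ) (h1 : ρ < 1) (g w : ConfigD d N → ℝ) (hw0 : ∀ η, 0 ≤ w η)
    (v : ℕ → Fin d → Fin N) (j : ℕ) : 0 ≤ pz ρ g w v j :=
  expectD_nonneg h0 h1 fun η =>
    mul_nonneg (sq_nonneg _) (mul_nonneg (hw0 η) (firstZ_nonneg v _ η))

/-- Decomposition according to the position of the first empty site. -/
lemma sum_pz (g w : ConfigD d N → ℝ) (v : ℕ → Fin d → Fin N) (a n : ℕ) :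
    ∑ j ∈ Finset.range n, pz ρ g w v (a + j)
      = expectD ρ (fun η => g η ^ 2 * (w η * full v a η))
        - expectD ρ (fun η => g η ^ 2 * (w η * full v (a + n) η)) := by
  induction n with
  | zero => simp
  | succ n ih =>
    rw [Finset.sum_range_succ, ih, pz]
    simp only [firstZ_eq, mul_sub, expectD_sub, ← add_assoc]
    ring

/-- A geometric recursion with summable errors: `p_n ≤ r^n p_0 + Σ e_j`. -/
lemma geom_rec {r : ℝ} (hr0 : 0 ≤ r) (hr1 : r ≤ 1) (p e : ℕ → ℝ) (n : ℕ)
    (he : ∀ j < n, 0 ≤ e j) (h : ∀ j < n, p (j + 1) ≤ r * p j + e j) :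
    p n ≤ r ^ n * p 0 + ∑ j ∈ Finset.range n, e j := by
  induction n with
  | zero => simp
  | succ n ih =>
    have i := ih (fun j hj => he j (by omega)) (fun j hj => h j (by omega))
    have hs : 0 ≤ ∑ j ∈ Finset.range n, e j :=
      Finset.sum_nonneg fun j hj => he j (by have := Finset.mem_range.1 hj; omega)
    rw [Finset.sum_range_succ, pow_succ]
    have := h n (Nat.lt_succ_self n)
    have := mul_le_mul_of_nonneg_left i hr0
    have := mul_le_of_le_one_left hs hr1
    nlinarith

lemma sum_pz_le (h0 : 0 < ρ) (h1 : ρ < 1) (g w : ConfigD d N → ℝ) (hw0 : ∀ η, 0 ≤ w η)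
    (hw1 : ∀ η, w η ≤ 1) (v : ℕ → Fin d → Fin N) (a n : ℕ) :
    ∑ j ∈ Finset.range n, pz ρ g w v (a + j) ≤ expectD ρ (fun η => g η ^ 2) := by
  rw [sum_pz]
  have i1 : 0 ≤ expectD ρ (fun η => g η ^ 2 * (w η * full v (a + n) η)) :=
    expectD_nonneg h0 h1 fun η => mul_nonneg (sq_nonneg _)
      (mul_nonneg (hw0 η) (full_nonneg v _ η))
  have i2 : expectD ρ (fun η => g η ^ 2 * (w η * full v a η)) ≤ expectD ρ (fun η => g η ^ 2) :=
    expectD_mono h0 h1 fun η => mul_le_of_le_one_right (sq_nonneg _)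
      (mul_le_one₀ (hw1 η) (full_nonneg v _ η) (full_le_one v _ η))
  linarith

lemma sum_adj_le (D : ℕ → ℝ) (hD : ∀ j, 0 ≤ D j) (n : ℕ) :
    ∑ j ∈ Finset.range n, (D j + D (j + 1)) ≤ 2 * ∑ j ∈ Finset.range (n + 1), D j := by
  rw [Finset.sum_add_distrib]
  have a1 := Finset.sum_range_succ D n
  have a2 := Finset.sum_range_succ' D n
  linarith [hD 0, hD n]

/-- The local estimate: under `g² ν`, the occupation of `v 0` has mean `ρ` up to Dirichlet form
errors, unless the whole window `v 0, …, v ℓ` is occupied. The weight `w` may depend on the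
configuration outside of the window. -/
lemma local_est (h0 : 0 < ρ) (h1 : ρ < 1) {c : ℕ} {v : ℕ → Fin d → Fin N} {ℓ : ℕ}
    (hv : IsChainD c v ℓ) (g w : ConfigD d N → ℝ) (hw0 : ∀ η, 0 ≤ w η) (hw1 : ∀ η, w η ≤ 1)
    (hwf : ∀ m ≤ ℓ, ∀ η, w (flipD η (v m)) = w η) {τ : ℝ} (hτ : 0 < τ) :
    -(ρ ^ ℓ * expectD ρ (fun η => g η ^ 2) + 8 / (1 - ρ) * (τ * expectD ρ (fun η => g η ^ 2)
        + (1 / τ) * ∑ j ∈ Finset.range (ℓ + 1), dsite ρ c g (v j)))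
      ≤ expectD ρ (fun η => g η ^ 2 * (w η * (occ η (v 0) - ρ))) ∧
    expectD ρ (fun η => g η ^ 2 * (w η * (occ η (v 0) - ρ)))
      ≤ expectD ρ (fun η => g η ^ 2 * full v (ℓ + 1) η) +
        8 / (1 - ρ) * (τ * expectD ρ (fun η => g η ^ 2)
        + (1 / τ) * ∑ j ∈ Finset.range (ℓ + 1), dsite ρ c g (v j)) := by
  set V := expectD ρ (fun η => g η ^ 2) with hV
  set p : ℕ → ℝ := pz ρ g w v with hp
  set D : ℕ → ℝ := fun j => dsite ρ c g (v j) with hD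
  set S := ∑ j ∈ Finset.range (ℓ + 1), dsite ρ c g (v j) with hS
  have hpos : 0 < 1 - ρ := by linarith
  have hp0 : ∀ j, 0 ≤ p j := fun j => pz_nonneg h0 h1 g w hw0 v j
  have hD0 : ∀ j, 0 ≤ D j := fun j => dsite_nonneg h0 h1 c g (v j)
  set e : ℕ → ℝ := fun j => 2 / (1 - ρ) * (τ * (p j + p (j + 1)) + (1 / τ) * (D j + D (j + 1)))
    with he
  have hstep : ∀ j < ℓ, |p (j + 1) - ρ * p j| ≤ e j := fun j hj =>
    pz_step h0 h1 hv g w hw0 hw1 hwf hj hτ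
  have he0 : ∀ j, 0 ≤ e j := fun j => by
    have := hp0 j; have := hp0 (j + 1); have := hD0 j; have := hD0 (j + 1)
    simp only [he]; positivity
  have hsp : ∑ j ∈ Finset.range (ℓ + 1), p j ≤ V := by
    simpa [hp] using sum_pz_le h0 h1 g w hw0 hw1 v 0 (ℓ + 1)
  set T := 4 / (1 - ρ) * (τ * V + (1 / τ) * S) with hT
  have hT2 : 8 / (1 - ρ) * (τ * V + (1 / τ) * S) = 2 * T := by rw [hT]; ring
  have hesum : ∑ j ∈ Finset.range ℓ, e j ≤ T := by
    have a1 := (sum_adj_le p hp0 ℓ).trans (mul_le_mul_of_nonneg_left hsp zero_le_two)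
    have a2 := sum_adj_le D hD0 ℓ
    have : ∑ j ∈ Finset.range ℓ, e j = 2 / (1 - ρ) * (τ * ∑ j ∈ Finset.range ℓ, (p j + p (j + 1))
        + (1 / τ) * ∑ j ∈ Finset.range ℓ, (D j + D (j + 1))) := by
      simp only [he, ← Finset.mul_sum, Finset.sum_add_distrib]
    rw [this]
    have : T = 2 / (1 - ρ) * (τ * (2 * V) + (1 / τ) * (2 * S)) := by rw [hT]; ring
    rw [this]
    gcongr
  have hT0 : 0 ≤ T := (Finset.sum_nonneg fun j _ => he0 j).trans hesum
  -- `s` is the mass of the event that the first empty site is one of `v 1, …, v ℓ`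
  set s := ∑ j ∈ Finset.range ℓ, p (j + 1) with hs
  have hs1 : ∑ j ∈ Finset.range ℓ, p j = p 0 + s - p ℓ := by
    have a1 := Finset.sum_range_succ p ℓ
    have a2 := Finset.sum_range_succ' p ℓ
    linarith
  have hErr : |(1 - ρ) * s - ρ * p 0 + ρ * p ℓ| ≤ T := by
    have : (1 - ρ) * s - ρ * p 0 + ρ * p ℓ = ∑ j ∈ Finset.range ℓ, (p (j + 1) - ρ * p j) := by
      rw [Finset.sum_sub_distrib, ← Finset.mul_sum, hs1]; ring
    rw [this]
    refine (Finset.abs_sum_le_sum_abs _ _).trans (le_trans (Finset.sum_le_sum fun j hj => ?_) hesum)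
    exact hstep j (Finset.mem_range.1 hj)
  set F := expectD ρ (fun η => g η ^ 2 * (w η * full v (ℓ + 1) η)) with hF
  have hF0 : 0 ≤ F := expectD_nonneg h0 h1 fun η => mul_nonneg (sq_nonneg _)
    (mul_nonneg (hw0 η) (full_nonneg v _ η))
  have hF1 : F ≤ expectD ρ (fun η => g η ^ 2 * full v (ℓ + 1) η) :=
    expectD_mono h0 h1 fun η => mul_le_mul_of_nonneg_left
      (mul_le_of_le_one_left (full_nonneg v _ η) (hw1 η)) (sq_nonneg _)
  have hid : expectD ρ (fun η => g η ^ 2 * (w η * (occ η (v 0) - ρ)))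
      = (1 - ρ) * (s + F) - ρ * p 0 := by
    have hsF : s + F = expectD ρ (fun η => g η ^ 2 * (w η * full v 1 η)) := by
      have := sum_pz (ρ := ρ) g w v 1 ℓ
      have h' : s = ∑ j ∈ Finset.range ℓ, pz ρ g w v (1 + j) :=
        Finset.sum_congr rfl fun j _ => by rw [hp, add_comm]
      rw [h', this, hF, add_comm 1 ℓ]; ring
    rw [hsF, hp, pz, ← expectD_smul, ← expectD_smul, ← expectD_sub]
    congr 1; funext η
    simp only [firstZ, full, Finset.prod_range_one, Finset.prod_range_zero]
    ring
  have hpl : p ℓ ≤ ρ ^ ℓ * V + T := by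
    have := geom_rec h0.le h1.le p e ℓ (fun j _ => he0 j)
      (fun j hj => by linarith [(abs_le.1 (hstep j hj)).2])
    have h2 : p 0 ≤ V := le_trans
      (Finset.single_le_sum (f := p) (fun j _ => hp0 j) (Finset.mem_range.2 (Nat.succ_pos ℓ))) hsp
    have := mul_le_mul_of_nonneg_left h2 (pow_nonneg h0.le ℓ)
    linarith
  rw [hT2, hid]
  have b := abs_le.1 hErr
  have c1 : ρ * p ℓ ≤ p ℓ := mul_le_of_le_one_left (hp0 ℓ) h1.le
  have c2 := mul_nonneg h0.le (hp0 ℓ)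
  have c3 : (1 - ρ) * F ≤ F := mul_le_of_le_one_left hF0 (by linarith)
  have c4 := mul_nonneg hpos.le hF0
  constructor
  · linarith [b.1]
  · linarith [b.2]

lemma ratio_aux (h0 : 0 < ρ) (h1 : ρ < 1) {a b e : ℝ} (ha : 0 ≤ a) (he : 0 ≤ e)
    (h : b - ρ * a ≤ (1 - ρ) / 4 * (a + b) + e / 2) : b ≤ (1 + ρ) / 2 * a + e := by
  have k : 0 < 1 - (1 - ρ) / 4 := by linarith
  refine le_of_mul_le_mul_left ?_ k
  have e1 : (1 - (1 - ρ) / 4) * ((1 + ρ) / 2 * a + e) - ((ρ + (1 - ρ) / 4) * a + e / 2)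
      = (1 - ρ) ^ 2 / 8 * a + (1 + ρ) / 4 * e := by ring
  have : 0 ≤ (1 - ρ) ^ 2 / 8 * a + (1 + ρ) / 4 * e := by positivity
  linarith

/-- At the end of the chain, where the flips are always allowed, full occupation of the chain is
comparable to the event that only the last site is empty. -/
lemma full_end (h0 : 0 < ρ) (h1 : ρ < 1) {c : ℕ} {v : ℕ → Fin d → Fin N} {M : ℕ}
    (hv : IsChainD c v M) (hM : ∀ η : ConfigD d N, 1 ≤ constrD c η (v M))
    (g : ConfigD d N → ℝ) :
    expectD ρ (fun η => g η ^ 2 * full v (M + 1) η)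
      ≤ 2 / (1 - ρ) * 2 / (1 - ρ) * (pz ρ g (fun _ => 1) v M + dsite ρ c g (v M)) := by
  have hpos : 0 < 1 - ρ := by linarith
  have hτ' : 0 < (1 - ρ) / 2 := by linarith
  have a := (abs_le.1 (flip_est h0 h1 c g (full v M) (v M)
    (fun η => full_nonneg v _ η) (fun η => (full_le_one v _ η).trans (hM η))
    (fun η => full_flip hv le_rfl le_rfl η) hτ')).2
  have hP := pz_nonneg h0 h1 g (fun _ => 1) (fun _ => zero_le_one) v M
  have i1 : expectD ρ (fun η => g η ^ 2 * full v M η) = pz ρ g (fun _ => 1) v M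
      + expectD ρ (fun η => g η ^ 2 * full v (M + 1) η) := by
    rw [pz, ← expectD_add]
    congr 1; funext η
    rw [firstZ, full_succ]; ring
  have i2 : expectD ρ (fun η => g η ^ 2 * (full v M η * (occ η (v M) - ρ)))
      = (1 - ρ) * expectD ρ (fun η => g η ^ 2 * full v (M + 1) η)
        - ρ * pz ρ g (fun _ => 1) v M := by
    rw [pz, ← expectD_smul, ← expectD_smul, ← expectD_sub]
    congr 1; funext η
    rw [firstZ, full_succ]; ring
  have e1 : 1 / ((1 - ρ) / 2) = 2 / (1 - ρ) := by field_simp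
  rw [i1, i2, e1] at a
  have hS := dsite_nonneg h0 h1 c g (v M)
  generalize pz ρ g (fun _ => 1) v M = P at *
  generalize dsite ρ c g (v M) = S at *
  generalize expectD ρ (fun η => g η ^ 2 * full v (M + 1) η) = F at *
  have b1 : (1 - ρ) / 2 * F ≤ P + 2 / (1 - ρ) * S := by
    have := mul_nonneg h0.le hP
    nlinarith
  have b2 : P ≤ 2 / (1 - ρ) * P := by
    refine le_mul_of_one_le_left hP ?_
    rw [le_div_iff₀ hpos]; linarith
  have b3 : (1 - ρ) / 2 * F ≤ 2 / (1 - ρ) * (P + S) := by linarith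
  have : F = 2 / (1 - ρ) * ((1 - ρ) / 2 * F) := by field_simp
  rw [this]
  calc _ ≤ 2 / (1 - ρ) * (2 / (1 - ρ) * (P + S)) :=
        mul_le_mul_of_nonneg_left b3 (by positivity)
    _ = _ := by ring

/-- Mass of a fully occupied window: along a chain that ends at a site which may always flip,
the mass of an occupied initial window of length `ℓ` is exponentially small in `ℓ`, up to a
multiple (independent of `ℓ` and of the length of the chain) of the Dirichlet form. -/
lemma full_est (h0 : 0 < ρ) (h1 : ρ < 1) : ∃ C : ℝ, 0 < C ∧ ∃ r : ℝ, 0 < r ∧ r < 1 ∧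
    ∀ {d N : ℕ} {c : ℕ} {v : ℕ → Fin d → Fin N} {M ℓ : ℕ}, IsChainD c v M → ℓ ≤ M →
      (∀ η : ConfigD d N, 1 ≤ constrD c η (v M)) → ∀ g : ConfigD d N → ℝ,
      expectD ρ (fun η => g η ^ 2 * full v (ℓ + 1) η)
        ≤ C * (r ^ ℓ * expectD ρ (fun η => g η ^ 2)
          + ∑ j ∈ Finset.range (M + 1), dsite ρ c g (v j)) := by
  have hpos : 0 < 1 - ρ := by linarith
  set K := 2 / (1 - ρ) with hK
  have hK0 : 0 < K := by positivity
  -- `τ` is chosen such that the perturbed ratio `(ρ + Kτ) / (1 - Kτ)` is at most `r < 1`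
  set τ := (1 - ρ) / (4 * K) with hτ
  have hτ0 : 0 < τ := by positivity
  have hKτ : K * τ = (1 - ρ) / 4 := by rw [hτ]; field_simp
  set r := (1 + ρ) / 2 with hr
  have hr0 : 0 < r := by positivity
  have hr1 : r < 1 := by rw [hr]; linarith
  set B := 2 * (K * (1 / τ)) with hB
  have hB0 : 0 < B := by positivity
  set G := 2 / (1 - ρ) * 2 / (1 - ρ) with hG
  have hG0 : 0 < G := by positivity
  set C := 1 / (1 - r) * (1 + 4 * B) + G * (1 + 2 * B + 1) + G with hC
  have h1r : 0 < 1 - r := by linarith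
  refine ⟨C, by positivity, r, hr0, hr1, ?_⟩
  intro d N c v M ℓ hv hℓ hM g
  set V := expectD ρ (fun η => g η ^ 2) with hV
  set p : ℕ → ℝ := pz ρ g (fun _ => 1) v with hp
  set D : ℕ → ℝ := fun j => dsite ρ c g (v j) with hD
  set S := ∑ j ∈ Finset.range (M + 1), dsite ρ c g (v j) with hS
  have hp0 : ∀ j, 0 ≤ p j := fun j => pz_nonneg h0 h1 g _ (fun _ => zero_le_one) v j
  have hD0 : ∀ j, 0 ≤ D j := fun j => dsite_nonneg h0 h1 c g (v j)
  have hstep : ∀ j < M, p (j + 1) ≤ r * p j + B * (D j + D (j + 1)) := fun j hj => by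
    have := (abs_le.1 (pz_step h0 h1 hv g (fun _ => 1) (fun _ => zero_le_one) (fun _ => le_rfl)
      (fun _ _ _ => rfl) hj hτ0)).2
    change p (j + 1) - ρ * p j ≤ K * (τ * (p j + p (j + 1)) + 1 / τ * (D j + D (j + 1))) at this
    have e : K * (τ * (p j + p (j + 1)) + 1 / τ * (D j + D (j + 1)))
        = (1 - ρ) / 4 * (p j + p (j + 1)) + B / 2 * (D j + D (j + 1)) := by
      rw [← hKτ, hB]; ring
    rw [e] at this
    have := hp0 j; have := hp0 (j + 1)
    have h3 := mul_nonneg hB0.le (add_nonneg (hD0 j) (hD0 (j + 1)))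
    rw [hr]
    exact ratio_aux h0 h1 (hp0 j) h3 (by linarith)
  have hV0 : 0 ≤ V := expectD_nonneg h0 h1 fun η => sq_nonneg _
  have hp0V : p 0 ≤ V := by
    simpa using sum_pz_le h0 h1 g (fun _ => 1) (fun _ => zero_le_one) (fun _ => le_rfl) v 0 1
  have hadj : ∀ n ≤ M, ∑ j ∈ Finset.range n, (D j + D (j + 1)) ≤ 2 * S := fun n hn => by
    refine (sum_adj_le D hD0 n).trans (mul_le_mul_of_nonneg_left ?_ zero_le_two)
    exact Finset.sum_le_sum_of_subset_of_nonneg (Finset.range_mono (by omega))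
      fun j _ _ => hD0 j
  have hS0 : 0 ≤ S := Finset.sum_nonneg fun j _ => hD0 j
  have hpn : ∀ n ≤ M, p n ≤ r ^ n * V + 2 * B * S := fun n hn => by
    have a := geom_rec hr0.le hr1.le p (fun j => B * (D j + D (j + 1))) n
      (fun j _ => mul_nonneg hB0.le (add_nonneg (hD0 j) (hD0 (j + 1))))
      (fun j hj => hstep j (by omega))
    rw [← Finset.mul_sum] at a
    have := mul_le_mul_of_nonneg_left (hadj n hn) hB0.le
    have := mul_le_mul_of_nonneg_left hp0V (pow_nonneg hr0.le n)
    linarith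
  -- the event that the first empty site is one of `v (ℓ+1), …, v M`
  obtain ⟨n, rfl⟩ : ∃ n, M = ℓ + n := ⟨M - ℓ, by omega⟩
  set s := ∑ j ∈ Finset.range n, p (ℓ + 1 + j) with hs
  set F := expectD ρ (fun η => g η ^ 2 * full v (ℓ + n + 1) η) with hF
  have hdec : expectD ρ (fun η => g η ^ 2 * full v (ℓ + 1) η) = s + F := by
    have := sum_pz (ρ := ρ) g (fun _ => 1) v (ℓ + 1) n
    simp only [one_mul] at this
    rw [hs, hp, this, hF, show ℓ + 1 + n = ℓ + n + 1 by ring]; ring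
  have hs0 : 0 ≤ s := Finset.sum_nonneg fun j _ => hp0 _
  have hsle : (1 - r) * s ≤ r ^ ℓ * V + 4 * B * S := by
    have a1 : s ≤ ∑ j ∈ Finset.range n, (r * p (ℓ + j) + B * (D (ℓ + j) + D (ℓ + j + 1))) :=
      Finset.sum_le_sum fun j hj => by
        have := Finset.mem_range.1 hj
        have := hstep (ℓ + j) (by omega)
        rwa [show ℓ + j + 1 = ℓ + 1 + j by ring] at this ⊢
    rw [Finset.sum_add_distrib, ← Finset.mul_sum, ← Finset.mul_sum] at a1
    have a2 : ∑ j ∈ Finset.range n, p (ℓ + j) ≤ p ℓ + s := by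
      have b1 := Finset.sum_range_succ (fun j => p (ℓ + j)) n
      have b2 := Finset.sum_range_succ' (fun j => p (ℓ + j)) n
      have b3 : s = ∑ j ∈ Finset.range n, p (ℓ + (j + 1)) :=
        Finset.sum_congr rfl fun j _ => by rw [show ℓ + (j + 1) = ℓ + 1 + j by ring]
      simp only [add_zero] at b2
      linarith [hp0 (ℓ + n)]
    have a3 : ∑ j ∈ Finset.range n, (D (ℓ + j) + D (ℓ + j + 1)) ≤ 2 * S := by
      refine le_trans ?_ (hadj (ℓ + n) le_rfl)
      rw [Finset.sum_range_add]
      exact le_add_of_nonneg_left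
        (Finset.sum_nonneg fun j _ => add_nonneg (hD0 j) (hD0 (j + 1)))
    have := hpn ℓ hℓ
    have := mul_le_mul_of_nonneg_left a2 hr0.le
    have := mul_le_mul_of_nonneg_left a3 hB0.le
    have := mul_le_of_le_one_left (hp0 ℓ) hr1.le
    nlinarith
  have hFle : F ≤ G * (p (ℓ + n) + S) := by
    refine (full_end h0 h1 hv hM g).trans (mul_le_mul_of_nonneg_left ?_ hG0.le)
    exact add_le_add le_rfl (Finset.single_le_sum (f := fun j => dsite ρ c g (v j))
      (fun j _ => hD0 j) (Finset.mem_range.2 (Nat.lt_succ_self _)))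
  have hpM : p (ℓ + n) ≤ r ^ ℓ * V + 2 * B * S := by
    refine (hpn (ℓ + n) le_rfl).trans ?_
    have := pow_le_pow_of_le_one hr0.le hr1.le (Nat.le_add_right ℓ n)
    have := mul_le_mul_of_nonneg_right this hV0
    linarith
  have hs2 : s ≤ 1 / (1 - r) * (r ^ ℓ * V + 4 * B * S) := by
    rw [one_div, ← div_eq_inv_mul, le_div_iff₀ h1r]; linarith
  rw [hdec]
  have hX : 0 ≤ r ^ ℓ * V := mul_nonneg (pow_nonneg hr0.le _) hV0
  generalize r ^ ℓ * V = X at *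
  have h1r' : 0 ≤ 1 / (1 - r) := by positivity
  clear_value C G B s F
  subst hC
  generalize 1 / (1 - r) = R at *
  have k1 : R * (X + 4 * B * S) ≤ R * ((1 + 4 * B) * (X + S)) :=
    mul_le_mul_of_nonneg_left (by nlinarith [mul_nonneg hB0.le hX]) h1r'
  have k2 : G * (p (ℓ + n) + S) ≤ G * ((1 + 2 * B + 1) * (X + S)) :=
    mul_le_mul_of_nonneg_left (by nlinarith [mul_nonneg hB0.le hX]) hG0.le
  have k3 := mul_nonneg hG0.le (add_nonneg hX hS0)
  linarith

end Chains

/-! ### Paths from a site to the empty part of the boundary -/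

/-- The site `i + e_j` (equal to `i` when this would leave the cube). -/
noncomputable def shP {d N : ℕ} (j : Fin d) (i : Fin d → Fin N) : Fin d → Fin N :=
  if h : (i j).1 + 1 < N then Function.update i j ⟨(i j).1 + 1, h⟩ else i

/-- The site `i - e_j` (equal to `i` when this would leave the cube). -/
noncomputable def shM {d N : ℕ} (j : Fin d) (i : Fin d → Fin N) : Fin d → Fin N :=
  Function.update i j ⟨(i j).1 - 1, lt_of_le_of_lt (Nat.sub_le _ _) (i j).isLt⟩

/-- One step of the path to the empty boundary: move in direction `+e_1` (coordinate `0`) up to the face, then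
bring the coordinates of index larger than `c` down to zero. -/
noncomputable def nxt {d N : ℕ} [NeZero d] (c : ℕ) (y : Fin d → Fin N) : Fin d → Fin N :=
  if (y 0).1 + 1 < N then shP 0 y
  else if h : ∃ k : Fin d, c < k.1 ∧ 0 < (y k).1 then shM h.choose y else y

/-- The number of steps of the path from `y` to a site adjacent to the empty boundary. -/
noncomputable def pot {d N : ℕ} [NeZero d] (c : ℕ) (y : Fin d → Fin N) : ℕ :=
  (N - 1 - (y 0).1) + ∑ k : Fin d, if c < k.1 then (y k).1 else 0

section Geometry

variable {ρ : ℝ} {d N : ℕ}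

lemma shP_of_lt {j : Fin d} {i : Fin d → Fin N} (h : (i j).1 + 1 < N) :
    shP j i = Function.update i j ⟨(i j).1 + 1, h⟩ := by
  simp [shP, h]

lemma shP_same {j : Fin d} {i : Fin d → Fin N} (h : (i j).1 + 1 < N) :
    (shP j i j).1 = (i j).1 + 1 := by
  simp [shP_of_lt h]

lemma shP_ne {j k : Fin d} (h : k ≠ j) (i : Fin d → Fin N) : shP j i k = i k := by
  unfold shP; split_ifs <;> simp [h]

lemma shM_same (j : Fin d) (i : Fin d → Fin N) : (shM j i j).1 = (i j).1 - 1 := by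
  simp [shM]

lemma shM_ne {j k : Fin d} (h : k ≠ j) (i : Fin d → Fin N) : shM j i k = i k := by
  simp [shM, h]

lemma shM_shP {j : Fin d} {i : Fin d → Fin N} (h : (i j).1 + 1 < N) :
    shM j (shP j i) = i := by
  funext k
  by_cases hk : k = j
  · subst hk; apply Fin.ext; rw [shM_same, shP_same h]; omega
  · rw [shM_ne hk, shP_ne hk]

lemma shP_shM {j : Fin d} {i : Fin d → Fin N} (h : 0 < (i j).1) :
    shP j (shM j i) = i := by
  have h' : (shM j i j).1 + 1 < N := by rw [shM_same]; have := (i j).2; omega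
  funext k
  by_cases hk : k = j
  · subst hk; apply Fin.ext; rw [shP_same h', shM_same]; omega
  · rw [shP_ne hk, shM_ne hk]

lemma nbrP_eq (c : ℕ) (η : ConfigD d N) {i : Fin d → Fin N} {j : Fin d}
    (h : (i j).1 + 1 < N) : nbrP c η i j = occ η (shP j i) := by
  simp [nbrP, h, occ, shP_of_lt h]

lemma nbrM_eq (η : ConfigD d N) {i : Fin d → Fin N} {j : Fin d}
    (h : 0 < (i j).1) : nbrM η i j = occ η (shM j i) := by
  rw [nbrM, if_pos h]; rfl

lemma adj_shP (c : ℕ) {j : Fin d} {i : Fin d → Fin N} (h : (i j).1 + 1 < N) (η : ConfigD d N) :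
    1 - occ η (shP j i) ≤ constrD c η i ∧ 1 - occ η i ≤ constrD c η (shP j i) := by
  constructor
  · rw [← nbrP_eq c η h]; exact one_sub_nbrP_le c η i j
  · have := one_sub_nbrM_le c η (shP j i) j
    rwa [nbrM_eq η (by rw [shP_same h]; omega), shM_shP h] at this

lemma adj_shM (c : ℕ) {j : Fin d} {i : Fin d → Fin N} (h : 0 < (i j).1) (η : ConfigD d N) :
    1 - occ η (shM j i) ≤ constrD c η i ∧ 1 - occ η i ≤ constrD c η (shM j i) := by
  have h' : (shM j i j).1 + 1 < N := by rw [shM_same]; have := (i j).2; omega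
  have := adj_shP c h' η
  rw [shP_shM h] at this
  exact this.symm

lemma IsChainD.mono {c : ℕ} {v : ℕ → Fin d → Fin N} {L L' : ℕ} (hv : IsChainD c v L)
    (h : L' ≤ L) : IsChainD c v L' where
  inj a ha b hb := hv.inj a (ha.trans h) b (hb.trans h)
  adj j hj := hv.adj j (hj.trans_le h)

/-- The number of sites with prescribed coordinates of index `1, …, c`. -/
lemma card_agree (c : ℕ) (hc : c + 1 ≤ d) (z : Fin d → Fin N) :
    (Finset.univ.filter (fun y : Fin d → Fin N =>
      ∀ k : Fin d, 1 ≤ k.1 → k.1 ≤ c → z k = y k)).card = N ^ (d - c) := by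
  have : Finset.univ.filter (fun y : Fin d → Fin N =>
      ∀ k : Fin d, 1 ≤ k.1 → k.1 ≤ c → z k = y k)
      = Fintype.piFinset (fun k : Fin d => if 1 ≤ k.1 ∧ k.1 ≤ c then {z k} else Finset.univ) := by
    ext y
    simp only [Finset.mem_filter, Finset.mem_univ, true_and, Fintype.mem_piFinset]
    refine forall_congr' fun k => ?_
    by_cases hk : 1 ≤ k.1 ∧ k.1 ≤ c
    · simp [hk, eq_comm]
    · simp only [hk, if_false, Finset.mem_univ, iff_true]; tauto
  rw [this, Fintype.card_piFinset]
  have e : ∀ k : Fin d, (if 1 ≤ k.1 ∧ k.1 ≤ c then ({z k} : Finset (Fin N)) else Finset.univ).card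
      = if 1 ≤ k.1 ∧ k.1 ≤ c then 1 else N := fun k => by split_ifs <;> simp
  simp only [e]
  rw [Finset.prod_ite, Finset.prod_const_one, one_mul, Finset.prod_const]
  congr 1
  have h1 : (Finset.univ.filter (fun k : Fin d => 1 ≤ k.1 ∧ k.1 ≤ c)).card = c := by
    rw [← Finset.card_map Fin.valEmbedding]
    have : (Finset.univ.filter (fun k : Fin d => 1 ≤ k.1 ∧ k.1 ≤ c)).map Fin.valEmbedding
        = Finset.Icc 1 c := by
      ext m
      simp only [Finset.mem_map, Finset.mem_filter, Finset.mem_univ, true_and,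
        Fin.valEmbedding_apply, Finset.mem_Icc]
      exact ⟨by rintro ⟨a, ha, rfl⟩; exact ha, fun h => ⟨⟨m, by omega⟩, h, rfl⟩⟩
    rw [this]; simp
  have h2 := Finset.card_filter_add_card_filter_not (s := (Finset.univ : Finset (Fin d)))
    (fun k : Fin d => 1 ≤ k.1 ∧ k.1 ≤ c)
  rw [h1, Finset.card_univ, Fintype.card_fin] at h2
  omega

variable [NeZero d]

lemma nxt_up (c : ℕ) {y : Fin d → Fin N} (h : (y 0).1 + 1 < N) : nxt c y = shP 0 y := by
  simp [nxt, h]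

lemma nxt_spec (c : ℕ) {y : Fin d → Fin N} (h : 0 < pot c y) :
    pot c (nxt c y) + 1 = pot c y ∧ (∀ k : Fin d, 1 ≤ k.1 → k.1 ≤ c → nxt c y k = y k) ∧
    ∀ η : ConfigD d N, 1 - occ η (nxt c y) ≤ constrD c η y ∧
      1 - occ η y ≤ constrD c η (nxt c y) := by
  by_cases h0 : (y 0).1 + 1 < N
  · rw [nxt_up c h0]
    refine ⟨?_, fun k hk _ => shP_ne (by rintro rfl; simp at hk) y, adj_shP c h0⟩
    unfold pot
    have : ∑ k : Fin d, (if c < k.1 then (shP 0 y k).1 else 0)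
        = ∑ k : Fin d, if c < k.1 then (y k).1 else 0 := by
      refine Finset.sum_congr rfl fun k _ => ?_
      by_cases hk : c < k.1
      · rw [shP_ne]; rintro rfl; simp at hk
      · simp [hk]
    rw [this, shP_same h0]; omega
  · have hex : ∃ k : Fin d, c < k.1 ∧ 0 < (y k).1 := by
      by_contra hcon
      push Not at hcon
      have : ∑ k : Fin d, (if c < k.1 then (y k).1 else 0) = 0 :=
        Finset.sum_eq_zero fun k _ => by
          split_ifs with hk
          · have := hcon k hk; omega
          · rfl
      unfold pot at h; omega
    have hn : nxt c y = shM hex.choose y := by unfold nxt; rw [if_neg h0, dif_pos hex]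
    obtain ⟨hk1, hk2⟩ := hex.choose_spec
    rw [hn]
    generalize hex.choose = m at *
    refine ⟨?_, fun k hk hkc => shM_ne (by rintro rfl; omega) y, adj_shM c hk2⟩
    unfold pot
    rw [shM_ne (by rintro rfl; simp at hk1), ← Finset.add_sum_erase _ _ (Finset.mem_univ m),
      ← Finset.add_sum_erase (a := m) _ (fun k : Fin d => if c < k.1 then (y k).1 else 0)
        (Finset.mem_univ m)]
    have : ∑ k ∈ Finset.univ.erase m, (if c < k.1 then (shM m y k).1 else 0)
        = ∑ k ∈ Finset.univ.erase m, if c < k.1 then (y k).1 else 0 :=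
      Finset.sum_congr rfl fun k hk => by rw [shM_ne (Finset.ne_of_mem_erase hk)]
    rw [this, if_pos hk1, if_pos hk1, shM_same]; omega

lemma nxt_iter (c : ℕ) (y : Fin d → Fin N) (j : ℕ) (hj : j ≤ pot c y) :
    pot c ((nxt c)^[j] y) + j = pot c y ∧
      ∀ k : Fin d, 1 ≤ k.1 → k.1 ≤ c → (nxt c)^[j] y k = y k := by
  induction j with
  | zero => simp
  | succ j ih =>
    obtain ⟨ih1, ih2⟩ := ih (by omega)
    rw [Function.iterate_succ_apply']
    obtain ⟨h1, h2, -⟩ := nxt_spec c (y := (nxt c)^[j] y) (by omega)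
    exact ⟨by omega, fun k hk hkc => by rw [h2 k hk hkc, ih2 k hk hkc]⟩

lemma nxt_iter_ne (c : ℕ) (y : Fin d → Fin N) {a b : ℕ} (ha : a ≤ pot c y) (hb : b ≤ pot c y)
    (hab : a ≠ b) : (nxt c)^[a] y ≠ (nxt c)^[b] y := by
  intro h
  have h1 := (nxt_iter c y a ha).1
  have h2 := (nxt_iter c y b hb).1
  rw [h] at h1; omega

lemma nxt_chain (c : ℕ) (y : Fin d → Fin N) :
    IsChainD c (fun j => (nxt c)^[j] y) (pot c y) where
  inj a ha b hb hab := nxt_iter_ne c y ha hb hab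
  adj j hj η := by
    have h1 := (nxt_iter c y j hj.le).1
    have := (nxt_spec c (y := (nxt c)^[j] y) (by omega)).2.2 η
    simpa only [Function.iterate_succ_apply'] using this

/-- The last site of the path is adjacent to an empty boundary site. -/
lemma nxt_end (c : ℕ) (y : Fin d → Fin N) (η : ConfigD d N) :
    1 ≤ constrD c η ((nxt c)^[pot c y] y) := by
  have h1 := (nxt_iter c y _ le_rfl).1
  set z := (nxt c)^[pot c y] y
  have hz : pot c z = 0 := by omega
  unfold pot at hz
  have hs : ∀ k : Fin d, c < k.1 → (z k).1 = 0 := by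
    intro k hk
    have := (Finset.sum_eq_zero_iff.1 (Nat.eq_zero_of_add_eq_zero hz).2) k (Finset.mem_univ k)
    simpa [hk] using this
  have h0 : ¬ (z 0).1 + 1 < N := by omega
  have : nbrP c η z 0 = 0 := by
    unfold nbrP
    rw [dif_neg h0, if_pos ⟨by simp, hs⟩]
  have h2 := one_sub_nbrP_le c η z 0
  rw [this] at h2; linarith

lemma nxt_iter_up (c : ℕ) (y : Fin d → Fin N) (j : ℕ) (hj : (y 0).1 + j < N) :
    ((nxt c)^[j] y 0).1 = (y 0).1 + j ∧ ∀ k : Fin d, k ≠ 0 → (nxt c)^[j] y k = y k := by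
  induction j with
  | zero => simp
  | succ j ih =>
    obtain ⟨ih1, ih2⟩ := ih (by omega)
    rw [Function.iterate_succ_apply', nxt_up c (by omega)]
    refine ⟨by rw [shP_same (by omega)]; omega, fun k hk => by rw [shP_ne hk, ih2 k hk]⟩

lemma le_pot (c : ℕ) (y : Fin d → Fin N) {ℓ : ℕ} (h : (y 0).1 + ℓ < N) : ℓ ≤ pot c y := by
  unfold pot; omega

/-- Summing the local Dirichlet forms along windows of length `ℓ` above all sites. -/
lemma window_sum (h0 : 0 < ρ) (h1 : ρ < 1) (c ℓ : ℕ) (g : ConfigD d N → ℝ) :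
    ∑ y ∈ Finset.univ.filter (fun y : Fin d → Fin N => (y 0).1 + ℓ < N),
      ∑ j ∈ Finset.range (ℓ + 1), dsite ρ c g ((nxt c)^[j] y)
      ≤ (ℓ + 1) * dirichletD ρ c g := by
  rw [Finset.sum_comm]
  calc _ ≤ ∑ j ∈ Finset.range (ℓ + 1), dirichletD ρ c g := by
        refine Finset.sum_le_sum fun j hj => ?_
        have hj' := Finset.mem_range.1 hj
        rw [dirichletD_eq, ← Finset.sum_image (s := Finset.univ.filter
          (fun y : Fin d → Fin N => (y 0).1 + ℓ < N)) (g := fun y => (nxt c)^[j] y)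
          (f := fun y => dsite ρ c g y)]
        · exact Finset.sum_le_univ_sum_of_nonneg fun x => dsite_nonneg h0 h1 c g x
        · intro a ha b hb hab
          simp only [Finset.coe_filter, Finset.mem_univ, true_and, Set.mem_ofPred_eq] at ha hb
          obtain ⟨a1, a2⟩ := nxt_iter_up c a j (by omega)
          obtain ⟨b1, b2⟩ := nxt_iter_up c b j (by omega)
          simp only at hab
          funext k
          by_cases hk : k = 0
          · subst hk; apply Fin.ext; rw [hab] at a1; omega
          · rw [← a2 k hk, ← b2 k hk, hab]
    _ = _ := by simp

/-- Summing the local Dirichlet forms along the whole paths: each site is visited by at most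
`N ^ (d - c)` of the paths, since these keep the coordinates of index `1, …, c` fixed. -/
lemma path_sum (h0 : 0 < ρ) (h1 : ρ < 1) (c : ℕ) (hc : c + 1 ≤ d) (g : ConfigD d N → ℝ) :
    ∑ y : Fin d → Fin N, ∑ j ∈ Finset.range (pot c y + 1), dsite ρ c g ((nxt c)^[j] y)
      ≤ (N : ℝ) ^ (d - c) * dirichletD ρ c g := by
  calc _ ≤ ∑ y : Fin d → Fin N, ∑ z : Fin d → Fin N,
        (if ∀ k : Fin d, 1 ≤ k.1 → k.1 ≤ c → z k = y k then dsite ρ c g z else 0) := by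
        refine Finset.sum_le_sum fun y _ => ?_
        rw [← Finset.sum_filter, ← Finset.sum_image (s := Finset.range (pot c y + 1))
          (g := fun j => (nxt c)^[j] y) (f := fun z => dsite ρ c g z)]
        · refine Finset.sum_le_sum_of_subset_of_nonneg ?_ fun x _ _ => dsite_nonneg h0 h1 c g x
          intro z hz
          obtain ⟨j, hj, rfl⟩ := Finset.mem_image.1 hz
          have := Finset.mem_range.1 hj
          simpa using (nxt_iter c y j (by omega)).2
        · intro a ha b hb hab
          by_contra hne
          have ha' := Finset.mem_range.1 (Finset.mem_coe.1 ha)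
          have hb' := Finset.mem_range.1 (Finset.mem_coe.1 hb)
          exact nxt_iter_ne c y (by omega) (by omega) hne hab
    _ = ∑ z : Fin d → Fin N, (N : ℝ) ^ (d - c) * dsite ρ c g z := by
        rw [Finset.sum_comm]
        refine Finset.sum_congr rfl fun z _ => ?_
        rw [← Finset.sum_filter, Finset.sum_const, card_agree c hc z]
        simp
    _ = _ := by rw [← Finset.mul_sum, dirichletD_eq]

end Geometry

/-! ### Local equilibrium at the sites away from the boundary -/

/-- The error with which the occupation number of `y` is replaced by `ρ` under `g² ν`, using the
`ℓ + 1` sites of the path that starts at `y`. -/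
noncomputable def errB (ρ : ℝ) {d N : ℕ} [NeZero d] (c ℓ : ℕ) (τ : ℝ) (g : ConfigD d N → ℝ)
    (y : Fin d → Fin N) : ℝ :=
  ρ ^ ℓ * expectD ρ (fun η => g η ^ 2) + 8 / (1 - ρ) * (τ * expectD ρ (fun η => g η ^ 2)
    + (1 / τ) * ∑ j ∈ Finset.range (ℓ + 1), dsite ρ c g ((nxt c)^[j] y))

/-- The `g² ν`-mass of the event that the first `ℓ + 1` sites of the path from `y` are occupied. -/
noncomputable def fullQ (ρ : ℝ) {d N : ℕ} [NeZero d] (c ℓ : ℕ) (g : ConfigD d N → ℝ)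
    (y : Fin d → Fin N) : ℝ :=
  expectD ρ (fun η => g η ^ 2 * full (fun j => (nxt c)^[j] y) (ℓ + 1) η)

/-- The product of the occupation numbers of the neighbors of `i` in the directions of `s`. -/
noncomputable def nbrProd {d N : ℕ} (i : Fin d → Fin N) (s : Finset (Fin d))
    (η : ConfigD d N) : ℝ :=
  ∏ j ∈ s, occ η (shP j i) * occ η (shM j i)

/-- The site `i` is at distance at least `1` from the lower faces and at least `ℓ + 1` from the
upper faces of the cube. -/
def Good {d N : ℕ} (ℓ : ℕ) (i : Fin d → Fin N) : Prop :=
  ∀ j, 1 ≤ (i j).1 ∧ (i j).1 + ℓ + 2 ≤ N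

section LocalEquilibrium

variable {ρ : ℝ} {d N : ℕ}

lemma nbrProd_nonneg (i : Fin d → Fin N) (s : Finset (Fin d)) (η : ConfigD d N) :
    0 ≤ nbrProd i s η :=
  Finset.prod_nonneg fun _ _ => mul_nonneg (occ_nonneg _ _) (occ_nonneg _ _)

lemma nbrProd_le_one (i : Fin d → Fin N) (s : Finset (Fin d)) (η : ConfigD d N) :
    nbrProd i s η ≤ 1 :=
  Finset.prod_le_one (fun _ _ => mul_nonneg (occ_nonneg _ _) (occ_nonneg _ _))
    fun _ _ => mul_le_one₀ (occ_le_one _ _) (occ_nonneg _ _) (occ_le_one _ _)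

lemma shP_apply_ne {ℓ : ℕ} {i : Fin d → Fin N} (hi : Good ℓ i) (j : Fin d) :
    shP j i j ≠ i j := by
  intro h
  have := hi j
  have h2 := shP_same (j := j) (i := i) (by omega)
  rw [h] at h2; omega

lemma shM_apply_ne {ℓ : ℕ} {i : Fin d → Fin N} (hi : Good ℓ i) (j : Fin d) :
    shM j i j ≠ i j := by
  intro h
  have := hi j
  have h2 := shM_same j i
  rw [h] at h2; omega

lemma constrD_good {ℓ : ℕ} {i : Fin d → Fin N} (hi : Good ℓ i) (c : ℕ) (η : ConfigD d N) :
    constrD c η i = 1 - nbrProd i Finset.univ η := by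
  unfold constrD nbrProd
  congr 1
  refine Finset.prod_congr rfl fun j _ => ?_
  have := hi j
  rw [nbrP_eq c η (by omega), nbrM_eq η (by omega)]

lemma nbrProd_flip (i : Fin d → Fin N) (s : Finset (Fin d)) (x : Fin d → Fin N)
    (h : ∀ j ∈ s, shP j i ≠ x ∧ shM j i ≠ x) (η : ConfigD d N) :
    nbrProd i s (flipD η x) = nbrProd i s η :=
  Finset.prod_congr rfl fun j hj => by
    rw [occ_flip_of_ne η (h j hj).1, occ_flip_of_ne η (h j hj).2]

variable [NeZero d]

lemma errB_nonneg (h0 : 0 < ρ) (h1 : ρ < 1) (c ℓ : ℕ) {τ : ℝ} (hτ : 0 < τ)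
    (g : ConfigD d N → ℝ) (y : Fin d → Fin N) : 0 ≤ errB ρ c ℓ τ g y := by
  have hV : 0 ≤ expectD ρ (fun η => g η ^ 2) := expectD_nonneg h0 h1 fun _ => sq_nonneg _
  have hL : 0 ≤ ∑ j ∈ Finset.range (ℓ + 1), dsite ρ c g ((nxt c)^[j] y) :=
    Finset.sum_nonneg fun j _ => dsite_nonneg h0 h1 c g _
  have : 0 < 1 - ρ := by linarith
  unfold errB; positivity

lemma fullQ_nonneg (h0 : 0 < ρ) (h1 : ρ < 1) (c ℓ : ℕ) (g : ConfigD d N → ℝ)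
    (y : Fin d → Fin N) : 0 ≤ fullQ ρ c ℓ g y :=
  expectD_nonneg h0 h1 fun _ => mul_nonneg (sq_nonneg _) (full_nonneg _ _ _)

/-- The local estimate `local_est` for the window that starts at `y` and goes up in direction `e_1`. -/
lemma win_est (h0 : 0 < ρ) (h1 : ρ < 1) (c ℓ : ℕ) {τ : ℝ} (hτ : 0 < τ) (g w : ConfigD d N → ℝ)
    (y : Fin d → Fin N) (hy : (y 0).1 + ℓ < N) (hw0 : ∀ η, 0 ≤ w η) (hw1 : ∀ η, w η ≤ 1)
    (hwf : ∀ m ≤ ℓ, ∀ η, w (flipD η ((nxt c)^[m] y)) = w η) :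
    -errB ρ c ℓ τ g y ≤ expectD ρ (fun η => g η ^ 2 * (w η * (occ η y - ρ))) ∧
      expectD ρ (fun η => g η ^ 2 * (w η * (occ η y - ρ)))
        ≤ fullQ ρ c ℓ g y + errB ρ c ℓ τ g y := by
  have hV : 0 ≤ expectD ρ (fun η => g η ^ 2) := expectD_nonneg h0 h1 fun _ => sq_nonneg _
  have h := local_est h0 h1 ((nxt_chain c y).mono (le_pot c y hy)) g w hw0 hw1 hwf hτ
  have hp : 0 ≤ ρ ^ ℓ * expectD ρ (fun η => g η ^ 2) := by positivity
  refine ⟨h.1, h.2.trans ?_⟩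
  unfold errB fullQ
  linarith

/-- The path from a neighbor of `i` in direction `j` avoids the neighbors of `i` in the
directions `j' ≠ j`. -/
lemma win_ne (c : ℕ) {i y z : Fin d → Fin N} {j j' : Fin d} (hjj : j ≠ j')
    (hy : ∀ k, k ≠ j → y k = i k) (hyj : y j ≠ i j) (hz : ∀ k, k ≠ j' → z k = i k)
    (hzj : z j' ≠ i j') {m : ℕ} (hm : (y 0).1 + m < N) : z ≠ (nxt c)^[m] y := by
  intro h
  have hk := (nxt_iter_up c y m hm).2
  by_cases hj0 : j = 0
  · exact hzj (by rw [h, hk j' (by rintro rfl; exact hjj hj0), hy j' (Ne.symm hjj)])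
  · exact hyj (by rw [← hk j hj0, ← h, hz j hjj])

/-- The path from `i + e_j` avoids `i - e_j`. -/
lemma win_ne' (c : ℕ) {ℓ : ℕ} {i : Fin d → Fin N} (hi : Good ℓ i) (j : Fin d) {m : ℕ}
    (hm : (shP j i 0).1 + m < N) : shM j i ≠ (nxt c)^[m] (shP j i) := by
  intro h
  obtain ⟨hk0, hk⟩ := nxt_iter_up c _ m hm
  have hs := shM_same j i
  have hij := hi j
  have hs' := shP_same (j := j) (i := i) (by omega)
  by_cases hj0 : j = 0
  · subst hj0
    rw [← h] at hk0; omega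
  · rw [h, hk j hj0] at hs; omega

lemma shP_zero_lt {ℓ : ℕ} {i : Fin d → Fin N} (hi : Good ℓ i) (j : Fin d) :
    (shP j i 0).1 + ℓ < N := by
  have := hi 0
  by_cases h : (0 : Fin d) = j
  · subst h; rw [shP_same (by omega)]; omega
  · rw [shP_ne h]; omega

lemma shM_zero_lt {ℓ : ℕ} {i : Fin d → Fin N} (hi : Good ℓ i) (j : Fin d) :
    (shM j i 0).1 + ℓ < N := by
  have := hi 0
  by_cases h : (0 : Fin d) = j
  · subst h; rw [shM_same]; omega
  · rw [shM_ne h]; omega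

/-- Replacing, one after the other, the occupation numbers of the neighbors of `i` by `ρ`. -/
lemma nbrProd_est (h0 : 0 < ρ) (h1 : ρ < 1) (c ℓ : ℕ) {τ : ℝ} (hτ : 0 < τ)
    (g : ConfigD d N → ℝ) {i : Fin d → Fin N} (hi : Good ℓ i) (s : Finset (Fin d)) :
    -∑ j ∈ s, (errB ρ c ℓ τ g (shP j i) + errB ρ c ℓ τ g (shM j i))
        ≤ expectD ρ (fun η => g η ^ 2 * (nbrProd i s η - ρ ^ (2 * s.card))) ∧
      expectD ρ (fun η => g η ^ 2 * (nbrProd i s η - ρ ^ (2 * s.card)))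
        ≤ ∑ j ∈ s, (fullQ ρ c ℓ g (shP j i) + fullQ ρ c ℓ g (shM j i)
          + (errB ρ c ℓ τ g (shP j i) + errB ρ c ℓ τ g (shM j i))) := by
  induction s using Finset.induction_on with
  | empty => simp [nbrProd, expectD]
  | insert j s hj ih =>
    have hP := shP_zero_lt hi j
    have hM := shM_zero_lt hi j
    have hav : ∀ y : Fin d → Fin N, (∀ k, k ≠ j → y k = i k) → y j ≠ i j → (y 0).1 + ℓ < N →
        ∀ m ≤ ℓ, ∀ j' ∈ s, shP j' i ≠ (nxt c)^[m] y ∧ shM j' i ≠ (nxt c)^[m] y := by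
      intro y hy hyj hy0 m hm j' hj'
      have hjj : j ≠ j' := by rintro rfl; exact hj hj'
      exact ⟨win_ne c hjj hy hyj (fun k hk => shP_ne hk i) (shP_apply_ne hi j') (by omega),
        win_ne c hjj hy hyj (fun k hk => shM_ne hk i) (shM_apply_ne hi j') (by omega)⟩
    have e1 := win_est h0 h1 c ℓ hτ g (fun η => nbrProd i s η * occ η (shM j i)) (shP j i) hP
      (fun η => mul_nonneg (nbrProd_nonneg _ _ _) (occ_nonneg _ _))
      (fun η => mul_le_one₀ (nbrProd_le_one _ _ _) (occ_nonneg _ _) (occ_le_one _ _))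
      (fun m hm η => by
        rw [nbrProd_flip i s _ (hav _ (fun k hk => shP_ne hk i) (shP_apply_ne hi j) hP m hm),
          occ_flip_of_ne η (win_ne' c hi j (by omega))])
    have e2 := win_est h0 h1 c ℓ hτ g (fun η => nbrProd i s η) (shM j i) hM
      (fun η => nbrProd_nonneg _ _ _) (fun η => nbrProd_le_one _ _ _)
      (fun m hm η =>
        nbrProd_flip i s _ (hav _ (fun k hk => shM_ne hk i) (shM_apply_ne hi j) hM m hm) η)
    have hsplit : expectD ρ (fun η => g η ^ 2 *
          (nbrProd i (insert j s) η - ρ ^ (2 * (insert j s).card)))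
        = expectD ρ (fun η => g η ^ 2 *
            (nbrProd i s η * occ η (shM j i) * (occ η (shP j i) - ρ)))
          + ρ * expectD ρ (fun η => g η ^ 2 * (nbrProd i s η * (occ η (shM j i) - ρ)))
          + ρ ^ 2 * expectD ρ (fun η => g η ^ 2 * (nbrProd i s η - ρ ^ (2 * s.card))) := by
      rw [← expectD_smul, ← expectD_smul, ← expectD_add, ← expectD_add]
      congr 1; funext η
      have : nbrProd i (insert j s) η
          = occ η (shP j i) * occ η (shM j i) * nbrProd i s η := Finset.prod_insert hj
      rw [this, Finset.card_insert_of_notMem hj]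
      ring
    rw [hsplit, Finset.sum_insert hj, Finset.sum_insert hj]
    have hB : ∀ y : Fin d → Fin N, 0 ≤ errB ρ c ℓ τ g y := errB_nonneg h0 h1 c ℓ hτ g
    have hQ : ∀ y : Fin d → Fin N, 0 ≤ fullQ ρ c ℓ g y := fullQ_nonneg h0 h1 c ℓ g
    have hS1 : 0 ≤ ∑ j ∈ s, (errB ρ c ℓ τ g (shP j i) + errB ρ c ℓ τ g (shM j i)) :=
      Finset.sum_nonneg fun j _ => add_nonneg (hB _) (hB _)
    have hS2 : 0 ≤ ∑ j ∈ s, (fullQ ρ c ℓ g (shP j i) + fullQ ρ c ℓ g (shM j i)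
          + (errB ρ c ℓ τ g (shP j i) + errB ρ c ℓ τ g (shM j i))) :=
      Finset.sum_nonneg fun j _ => add_nonneg (add_nonneg (hQ _) (hQ _)) (add_nonneg (hB _) (hB _))
    have hρ2 : ρ ^ 2 ≤ 1 := pow_le_one₀ h0.le h1.le
    have hρ20 : 0 ≤ ρ ^ 2 := sq_nonneg _
    -- multiplying a two-sided bound around `0` by a factor in `[0, 1]`
    have shrink : ∀ {t x a b : ℝ}, 0 ≤ t → t ≤ 1 → 0 ≤ a → 0 ≤ b → -a ≤ x → x ≤ b →
        -a ≤ t * x ∧ t * x ≤ b := by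
      intro t x a b ht ht1 ha hb hax hxb
      constructor
      · nlinarith [mul_nonneg ht (sub_nonneg.2 hax), mul_nonneg (sub_nonneg.2 ht1) ha]
      · nlinarith [mul_nonneg ht (sub_nonneg.2 hxb), mul_nonneg (sub_nonneg.2 ht1) hb]
    have f1 := shrink h0.le h1.le (hB (shM j i)) (add_nonneg (hQ _) (hB _)) e2.1 e2.2
    have f2 := shrink hρ20 hρ2 hS1 hS2 ih.1 ih.2
    constructor
    · linarith [e1.1, f1.1, f2.1]
    · linarith [e1.2, f1.2, f2.2]

/-- Local equilibrium for the jump rate at a good site. -/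
lemma good_est (h0 : 0 < ρ) (h1 : ρ < 1) (c ℓ : ℕ) {τ : ℝ} (hτ : 0 < τ)
    (g : ConfigD d N → ℝ) {i : Fin d → Fin N} (hi : Good ℓ i) :
    expectD ρ (fun η => g η ^ 2 *
          (crateD ρ c η i - 2 * ρ * (1 - ρ) * (1 - ρ ^ (2 * d))))
        ≤ (τ * expectD ρ (fun η => g η ^ 2) + (1 / τ) * dsite ρ c g i)
          + ∑ j, (errB ρ c ℓ τ g (shP j i) + errB ρ c ℓ τ g (shM j i)) ∧
      -expectD ρ (fun η => g η ^ 2 *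
          (crateD ρ c η i - 2 * ρ * (1 - ρ) * (1 - ρ ^ (2 * d))))
        ≤ (τ * expectD ρ (fun η => g η ^ 2) + (1 / τ) * dsite ρ c g i)
          + ∑ j, (fullQ ρ c ℓ g (shP j i) + fullQ ρ c ℓ g (shM j i)
          + (errB ρ c ℓ τ g (shP j i) + errB ρ c ℓ τ g (shM j i))) := by
  have hflip := flip_est h0 h1 c g (fun η => constrD c η i) i (fun η => constrD_nonneg c η i)
    (fun η => le_rfl) (fun η => by
      rw [constrD_good hi, constrD_good hi, nbrProd_flip]
      intro j _
      exact ⟨fun h => shP_apply_ne hi j (by rw [h]), fun h => shM_apply_ne hi j (by rw [h])⟩) hτ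
  have hV : expectD ρ (fun η => g η ^ 2 * constrD c η i) ≤ expectD ρ (fun η => g η ^ 2) :=
    expectD_mono h0 h1 fun η => mul_le_of_le_one_right (sq_nonneg _) (constrD_le_one c η i)
  have hN := nbrProd_est h0 h1 c ℓ hτ g hi Finset.univ
  rw [Finset.card_univ, Fintype.card_fin] at hN
  have hsplit : expectD ρ (fun η => g η ^ 2 *
          (crateD ρ c η i - 2 * ρ * (1 - ρ) * (1 - ρ ^ (2 * d))))
      = (1 - 2 * ρ) * expectD ρ (fun η => g η ^ 2 * (constrD c η i * (occ η i - ρ)))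
        - 2 * ρ * (1 - ρ) * expectD ρ (fun η => g η ^ 2 *
            (nbrProd i Finset.univ η - ρ ^ (2 * d))) := by
    rw [← expectD_smul, ← expectD_smul, ← expectD_sub]
    congr 1; funext η
    have h2 : (if η i then 1 - ρ else ρ) = ρ + (1 - 2 * ρ) * occ η i := by
      unfold occ; split_ifs <;> ring
    rw [crateD, h2, constrD_good hi]
    ring
  have hB : ∀ y : Fin d → Fin N, 0 ≤ errB ρ c ℓ τ g y := errB_nonneg h0 h1 c ℓ hτ g
  have hQ : ∀ y : Fin d → Fin N, 0 ≤ fullQ ρ c ℓ g y := fullQ_nonneg h0 h1 c ℓ g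
  have hS1 : 0 ≤ ∑ j, (errB ρ c ℓ τ g (shP j i) + errB ρ c ℓ τ g (shM j i)) :=
    Finset.sum_nonneg fun j _ => add_nonneg (hB _) (hB _)
  have hS2 : 0 ≤ ∑ j, (fullQ ρ c ℓ g (shP j i) + fullQ ρ c ℓ g (shM j i)
        + (errB ρ c ℓ τ g (shP j i) + errB ρ c ℓ τ g (shM j i))) :=
    Finset.sum_nonneg fun j _ => add_nonneg (add_nonneg (hQ _) (hQ _)) (add_nonneg (hB _) (hB _))
  have hf1 : |(1 - 2 * ρ) * expectD ρ (fun η => g η ^ 2 * (constrD c η i * (occ η i - ρ)))|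
      ≤ τ * expectD ρ (fun η => g η ^ 2) + (1 / τ) * dsite ρ c g i := by
    rw [abs_mul]
    have ha : |1 - 2 * ρ| ≤ 1 := abs_le.2 ⟨by linarith, by linarith⟩
    refine (mul_le_of_le_one_left (abs_nonneg _) ha).trans (hflip.trans ?_)
    gcongr
  obtain ⟨hf2, hf3⟩ := abs_le.1 hf1
  have hq0 : 0 ≤ 2 * ρ * (1 - ρ) := by nlinarith
  have hq1 : 2 * ρ * (1 - ρ) ≤ 1 := by nlinarith [sq_nonneg (2 * ρ - 1)]
  set q := 2 * ρ * (1 - ρ)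
  set Y := expectD ρ (fun η => g η ^ 2 * (nbrProd i Finset.univ η - ρ ^ (2 * d)))
  rw [hsplit]
  constructor
  · nlinarith [mul_nonneg hq0 (sub_nonneg.2 hN.1), mul_nonneg (sub_nonneg.2 hq1) hS1]
  · nlinarith [mul_nonneg hq0 (sub_nonneg.2 hN.2), mul_nonneg (sub_nonneg.2 hq1) hS2]

end LocalEquilibrium

/-! ### Summation over the sites -/

section Summation

variable {ρ : ℝ} {d N : ℕ}

lemma card_coord (j : Fin d) (S : Finset (Fin N)) :
    (Finset.univ.filter (fun i : Fin d → Fin N => i j ∈ S)).card = S.card * N ^ (d - 1) := by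
  have : Finset.univ.filter (fun i : Fin d → Fin N => i j ∈ S)
      = Fintype.piFinset (fun k : Fin d => if k = j then S else Finset.univ) := by
    ext i
    simp only [Finset.mem_filter, Finset.mem_univ, true_and, Fintype.mem_piFinset]
    constructor
    · intro h k
      split_ifs with hk
      · subst hk; exact h
      · exact Finset.mem_univ _
    · intro h; simpa using h j
  rw [this, Fintype.card_piFinset, ← Finset.mul_prod_erase _ _ (Finset.mem_univ j)]
  have e : ∏ k ∈ Finset.univ.erase j,
      (if k = j then S else (Finset.univ : Finset (Fin N))).card = N ^ (d - 1) := by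
    rw [Finset.prod_congr rfl (g := fun _ => N)
      fun k hk => by rw [if_neg (Finset.ne_of_mem_erase hk)]; simp]
    rw [Finset.prod_const, Finset.card_erase_of_mem (Finset.mem_univ j), Finset.card_univ,
      Fintype.card_fin]
  rw [e, if_pos rfl]

lemma card_near_face (ℓ : ℕ) :
    (Finset.univ.filter (fun a : Fin N => ¬ (1 ≤ a.1 ∧ a.1 + ℓ + 2 ≤ N))).card ≤ ℓ + 2 := by
  rw [← Finset.card_map Fin.valEmbedding]
  calc _ ≤ (insert 0 (Finset.Ico (N - (ℓ + 1)) N)).card := by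
        refine Finset.card_le_card fun m hm => ?_
        simp only [Finset.mem_map, Finset.mem_filter, Finset.mem_univ, true_and,
          Fin.valEmbedding_apply] at hm
        obtain ⟨a, ha, rfl⟩ := hm
        have := a.2
        simp only [Finset.mem_insert, Finset.mem_Ico]
        omega
    _ ≤ (Finset.Ico (N - (ℓ + 1)) N).card + 1 := Finset.card_insert_le _ _
    _ ≤ _ := by rw [Nat.card_Ico]; omega

lemma card_bad (ℓ : ℕ) :
    (Finset.univ.filter (fun i : Fin d → Fin N => ¬ Good ℓ i)).card
      ≤ d * (ℓ + 2) * N ^ (d - 1) := by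
  calc _ ≤ (Finset.univ.biUnion fun j : Fin d =>
          Finset.univ.filter (fun i : Fin d → Fin N => i j ∈
            Finset.univ.filter (fun a : Fin N => ¬ (1 ≤ a.1 ∧ a.1 + ℓ + 2 ≤ N)))).card := by
        refine Finset.card_le_card fun i hi => ?_
        have hi' : ¬ Good ℓ i := (Finset.mem_filter.1 hi).2
        unfold Good at hi'
        obtain ⟨j, hj⟩ := not_forall.1 hi'
        refine Finset.mem_biUnion.2 ⟨j, Finset.mem_univ _, ?_⟩
        simp only [Finset.mem_filter, Finset.mem_univ, true_and]
        exact hj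
    _ ≤ ∑ j : Fin d, (ℓ + 2) * N ^ (d - 1) := by
        refine Finset.card_biUnion_le.trans (Finset.sum_le_sum fun j _ => ?_)
        rw [card_coord]
        exact Nat.mul_le_mul_right _ (card_near_face ℓ)
    _ = _ := by simp [mul_assoc]

variable [NeZero d]

/-- Every site is at most once of the form `i + e_j` and at most once of the form `i - e_j`. -/
lemma sum_good_le (ℓ : ℕ) (F : (Fin d → Fin N) → ℝ) (hF : ∀ y, 0 ≤ F y) :
    ∑ i ∈ Finset.univ.filter (fun i : Fin d → Fin N => Good ℓ i),
        ∑ j, (F (shP j i) + F (shM j i))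
      ≤ 2 * d * ∑ y ∈ Finset.univ.filter (fun y : Fin d → Fin N => (y 0).1 + ℓ < N), F y := by
  rw [Finset.sum_comm]
  set S := ∑ y ∈ Finset.univ.filter (fun y : Fin d → Fin N => (y 0).1 + ℓ < N), F y
  have aux : ∀ f : (Fin d → Fin N) → (Fin d → Fin N), (∀ i, Good ℓ i → (f i 0).1 + ℓ < N) →
      (∀ i i', Good ℓ i → Good ℓ i' → f i = f i' → i = i') →
      ∑ i ∈ Finset.univ.filter (fun i : Fin d → Fin N => Good ℓ i), F (f i) ≤ S := by
    intro f hf1 hf2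
    rw [← Finset.sum_image (g := f) (f := F)]
    · refine Finset.sum_le_sum_of_subset_of_nonneg ?_ fun y _ _ => hF y
      intro y hy
      obtain ⟨i, hi, rfl⟩ := Finset.mem_image.1 hy
      simpa using hf1 i (Finset.mem_filter.1 hi).2
    · intro i hi i' hi' h
      exact hf2 i i' (Finset.mem_filter.1 (Finset.mem_coe.1 hi)).2
        (Finset.mem_filter.1 (Finset.mem_coe.1 hi')).2 h
  calc _ ≤ ∑ j : Fin d, (S + S) := by
        refine Finset.sum_le_sum fun j _ => ?_
        rw [Finset.sum_add_distrib]
        refine add_le_add (aux _ (fun i hi => shP_zero_lt hi j) fun i i' hi hi' h => ?_)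
          (aux _ (fun i hi => shM_zero_lt hi j) fun i i' hi hi' h => ?_)
        · have a := hi j
          have a' := hi' j
          rw [← shM_shP (i := i) (j := j) (by omega), h, shM_shP (by omega)]
        · have a := hi j
          have a' := hi' j
          rw [← shP_shM (i := i) (j := j) (by omega), h, shP_shM (by omega)]
    _ = _ := by simp; ring

lemma sum_errB_le (h0 : 0 < ρ) (h1 : ρ < 1) (c ℓ : ℕ) {τ : ℝ} (hτ : 0 < τ)
    (g : ConfigD d N → ℝ) (hg : expectD ρ (fun η => g η ^ 2) = 1) :
    ∑ y ∈ Finset.univ.filter (fun y : Fin d → Fin N => (y 0).1 + ℓ < N), errB ρ c ℓ τ g y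
      ≤ (N : ℝ) ^ d * (ρ ^ ℓ + 8 / (1 - ρ) * τ)
        + 8 / (1 - ρ) * ((1 / τ) * ((ℓ + 1) * dirichletD ρ c g)) := by
  have hpos : 0 < 1 - ρ := by linarith
  unfold errB
  rw [hg]
  simp only [mul_one, mul_add]
  rw [Finset.sum_add_distrib, Finset.sum_add_distrib, Finset.sum_const, Finset.sum_const,
    ← Finset.mul_sum, ← Finset.mul_sum]
  have hw := window_sum h0 h1 c ℓ g
  have hcard : ((Finset.univ.filter (fun y : Fin d → Fin N => (y 0).1 + ℓ < N)).card : ℝ)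
      ≤ (N : ℝ) ^ d := by
    have := Finset.card_le_univ (Finset.univ.filter (fun y : Fin d → Fin N => (y 0).1 + ℓ < N))
    simp only [Fintype.card_pi, Fintype.card_fin, Finset.prod_const, Finset.card_univ] at this
    exact_mod_cast this
  simp only [nsmul_eq_mul]
  have e1 := mul_le_mul_of_nonneg_right hcard (show (0 : ℝ) ≤ ρ ^ ℓ by positivity)
  have e2 := mul_le_mul_of_nonneg_right hcard (show (0 : ℝ) ≤ 8 / (1 - ρ) * τ by positivity)
  have e3 : 8 / (1 - ρ) * (1 / τ * ∑ y ∈ Finset.univ.filter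
      (fun y : Fin d → Fin N => (y 0).1 + ℓ < N),
        ∑ j ∈ Finset.range (ℓ + 1), dsite ρ c g ((nxt c)^[j] y))
      ≤ 8 / (1 - ρ) * (1 / τ * ((ℓ + 1) * dirichletD ρ c g)) := by
    gcongr
  linarith

/-- The comparison of the escape rate under `g² ν` with its stationary mean. -/
lemma core_est (h0 : 0 < ρ) (h1 : ρ < 1) (c : ℕ) (hc : c + 1 ≤ d) :
    ∃ C₁ : ℝ, 0 < C₁ ∧ ∀ ε : ℝ, 0 < ε → ∃ A : ℝ, 0 < A ∧ ∀ (N : ℕ) (g : ConfigD d N → ℝ),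
      expectD ρ (fun η => g η ^ 2) = 1 → ∀ τ : ℝ, 0 < τ →
      (expectD ρ (fun η => g η ^ 2 * escD ρ c η)
          - 2 * ρ * (1 - ρ) * (1 - ρ ^ (2 * d)) * (N : ℝ) ^ d
        ≤ ε * (N : ℝ) ^ d + A * ((N : ℝ) ^ (d - 1) + τ * (N : ℝ) ^ d
          + 1 / τ * dirichletD ρ c g)) ∧
      (-(expectD ρ (fun η => g η ^ 2 * escD ρ c η)
          - 2 * ρ * (1 - ρ) * (1 - ρ ^ (2 * d)) * (N : ℝ) ^ d)
        ≤ ε * (N : ℝ) ^ d + A * ((N : ℝ) ^ (d - 1) + τ * (N : ℝ) ^ d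
          + 1 / τ * dirichletD ρ c g)
          + C₁ * ((N : ℝ) ^ (d - c) * dirichletD ρ c g)) := by
  obtain ⟨C, hC, r, hr0, hr1, hfull⟩ := full_est h0 h1
  have hd0 : (0 : ℝ) < d := by exact_mod_cast (by omega : 0 < d)
  have hpos : 0 < 1 - ρ := by linarith
  refine ⟨2 * d * C, by positivity, fun ε hε => ?_⟩
  -- `ℓ` is such that both geometric errors are negligible
  obtain ⟨ℓ, hℓ⟩ : ∃ ℓ : ℕ, 2 * d * (ρ ^ ℓ + C * r ^ ℓ) ≤ ε := by
    have t : Tendsto (fun ℓ : ℕ => 2 * d * (ρ ^ ℓ + C * r ^ ℓ)) atTop (nhds 0) := by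
      have a := tendsto_pow_atTop_nhds_zero_of_lt_one h0.le h1
      have b := tendsto_pow_atTop_nhds_zero_of_lt_one hr0.le hr1
      simpa using (a.add (b.const_mul C)).const_mul (2 * (d : ℝ))
    obtain ⟨ℓ, hℓ⟩ := (t.eventually (gt_mem_nhds hε)).exists
    exact ⟨ℓ, hℓ.le⟩
  set K := 8 / (1 - ρ) with hK
  have hK0 : 0 < K := by positivity
  refine ⟨d * (ℓ + 2) + 1 + 2 * d * (K * (ℓ + 1)), by positivity, fun N g hg τ hτ => ?_⟩
  set 𝔸 := 2 * ρ * (1 - ρ) * (1 - ρ ^ (2 * d)) with hA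
  set D := dirichletD ρ c g with hD
  have hD0 : 0 ≤ D := Finset.sum_nonneg fun x _ => dsite_nonneg h0 h1 c g x
  have hp1 : ρ ^ (2 * d) ≤ 1 := pow_le_one₀ h0.le h1.le
  have hp0 : 0 ≤ ρ ^ (2 * d) := by positivity
  have hq0 : 0 ≤ 2 * ρ * (1 - ρ) := by nlinarith
  have hq1 : 2 * ρ * (1 - ρ) ≤ 1 := by nlinarith [sq_nonneg (2 * ρ - 1)]
  have hA0 : 0 ≤ 𝔸 := mul_nonneg hq0 (by linarith)
  have hA1 : 𝔸 ≤ 1 := mul_le_one₀ hq1 (by linarith) (by linarith)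
  set E : (Fin d → Fin N) → ℝ :=
    fun i => expectD ρ (fun η => g η ^ 2 * (crateD ρ c η i - 𝔸)) with hE
  have hX : expectD ρ (fun η => g η ^ 2 * escD ρ c η) - 𝔸 * (N : ℝ) ^ d = ∑ i, E i := by
    have : 𝔸 * (N : ℝ) ^ d = expectD ρ (fun η : ConfigD d N => 𝔸 * (N : ℝ) ^ d * g η ^ 2) := by
      rw [expectD_smul, hg, mul_one]
    rw [this, ← expectD_sub, hE, ← expectD_sum]
    congr 1; funext η
    rw [← Finset.mul_sum, Finset.sum_sub_distrib, Finset.sum_const, Finset.card_univ,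
      Fintype.card_pi]
    simp only [Fintype.card_fin, Finset.prod_const, Finset.card_univ, nsmul_eq_mul, escD]
    push_cast; ring
  have hEb : ∀ i, |E i| ≤ 1 := by
    intro i
    have hup : E i ≤ expectD ρ (fun η => g η ^ 2) := expectD_mono h0 h1 fun η =>
      mul_le_of_le_one_right (sq_nonneg _) (by linarith [crateD_le_one h0 h1 c η i])
    have hlo : expectD ρ (fun η => (-1) * g η ^ 2) ≤ E i := expectD_mono h0 h1 fun η => by
      nlinarith [mul_nonneg (sq_nonneg (g η))
        (show 0 ≤ crateD ρ c η i - 𝔸 + 1 by linarith [crateD_nonneg h0 h1 c η i])]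
    rw [expectD_smul, hg] at hlo
    rw [hg] at hup
    exact abs_le.2 ⟨by linarith, hup⟩
  set G := Finset.univ.filter (fun i : Fin d → Fin N => Good ℓ i) with hG
  have hsplit : ∑ i, E i = ∑ i ∈ G, E i
      + ∑ i ∈ Finset.univ.filter (fun i : Fin d → Fin N => ¬ Good ℓ i), E i :=
    (Finset.sum_filter_add_sum_filter_not _ _ _).symm
  have hbad : |∑ i ∈ Finset.univ.filter (fun i : Fin d → Fin N => ¬ Good ℓ i), E i|
      ≤ d * (ℓ + 2) * (N : ℝ) ^ (d - 1) := by
    refine (Finset.abs_sum_le_sum_abs _ _).trans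
      ((Finset.sum_le_sum fun i _ => hEb i).trans ?_)
    rw [Finset.sum_const, nsmul_eq_mul, mul_one]
    exact_mod_cast card_bad ℓ
  have hflip : ∑ i ∈ G, (τ * 1 + 1 / τ * dsite ρ c g i) ≤ τ * (N : ℝ) ^ d + 1 / τ * D := by
    rw [hD, dirichletD_eq, Finset.mul_sum]
    refine (Finset.sum_le_univ_sum_of_nonneg fun i => ?_).trans ?_
    · have := dsite_nonneg h0 h1 c g i; positivity
    · rw [Finset.sum_add_distrib]
      simp only [Finset.sum_const, Finset.card_univ, Fintype.card_pi, Fintype.card_fin,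
        Finset.prod_const, nsmul_eq_mul]
      push_cast
      linarith
  have hB := sum_errB_le h0 h1 c ℓ hτ g hg
  have hBs := sum_good_le (N := N) (d := d) ℓ (errB ρ c ℓ τ g) (errB_nonneg h0 h1 c ℓ hτ g)
  have hQs := sum_good_le (N := N) (d := d) ℓ (fullQ ρ c ℓ g) (fullQ_nonneg h0 h1 c ℓ g)
  have hQ : ∑ y ∈ Finset.univ.filter (fun y : Fin d → Fin N => (y 0).1 + ℓ < N), fullQ ρ c ℓ g y
      ≤ C * (r ^ ℓ * (N : ℝ) ^ d + (N : ℝ) ^ (d - c) * D) := by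
    have hDn : ∀ y : Fin d → Fin N,
        0 ≤ ∑ j ∈ Finset.range (pot c y + 1), dsite ρ c g ((nxt c)^[j] y) :=
      fun y => Finset.sum_nonneg fun j _ => dsite_nonneg h0 h1 c g _
    calc _ ≤ ∑ y ∈ Finset.univ.filter (fun y : Fin d → Fin N => (y 0).1 + ℓ < N),
          C * (r ^ ℓ * 1 + ∑ j ∈ Finset.range (pot c y + 1), dsite ρ c g ((nxt c)^[j] y)) := by
          refine Finset.sum_le_sum fun y hy => ?_
          have := hfull (nxt_chain c y) (le_pot c y (Finset.mem_filter.1 hy).2) (nxt_end c y) g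
          rwa [hg] at this
      _ ≤ ∑ y : Fin d → Fin N,
          C * (r ^ ℓ * 1 + ∑ j ∈ Finset.range (pot c y + 1), dsite ρ c g ((nxt c)^[j] y)) := by
          refine Finset.sum_le_univ_sum_of_nonneg fun y => ?_
          have := hDn y; positivity
      _ = C * (r ^ ℓ * (N : ℝ) ^ d + ∑ y : Fin d → Fin N,
            ∑ j ∈ Finset.range (pot c y + 1), dsite ρ c g ((nxt c)^[j] y)) := by
          rw [← Finset.mul_sum, Finset.sum_add_distrib]
          simp only [Finset.sum_const, Finset.card_univ, Fintype.card_pi, Fintype.card_fin,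
            Finset.prod_const, nsmul_eq_mul]
          push_cast; ring
      _ ≤ _ := by
          have := path_sum (N := N) h0 h1 c hc g
          gcongr
  have hup : ∑ i ∈ G, E i ≤ ∑ i ∈ G, (τ * 1 + 1 / τ * dsite ρ c g i)
      + ∑ i ∈ G, ∑ j, (errB ρ c ℓ τ g (shP j i) + errB ρ c ℓ τ g (shM j i)) := by
    rw [← Finset.sum_add_distrib]
    refine Finset.sum_le_sum fun i hi => ?_
    have := (good_est h0 h1 c ℓ hτ g (Finset.mem_filter.1 hi).2).1
    rwa [hg] at this
  have hlo : -∑ i ∈ G, E i ≤ ∑ i ∈ G, (τ * 1 + 1 / τ * dsite ρ c g i)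
      + (∑ i ∈ G, ∑ j, (fullQ ρ c ℓ g (shP j i) + fullQ ρ c ℓ g (shM j i))
      + ∑ i ∈ G, ∑ j, (errB ρ c ℓ τ g (shP j i) + errB ρ c ℓ τ g (shM j i))) := by
    rw [← Finset.sum_add_distrib, ← Finset.sum_add_distrib, ← Finset.sum_neg_distrib]
    refine Finset.sum_le_sum fun i hi => ?_
    have := (good_est h0 h1 c ℓ hτ g (Finset.mem_filter.1 hi).2).2
    rwa [hg, Finset.sum_add_distrib (s := Finset.univ)
      (f := fun j => fullQ ρ c ℓ g (shP j i) + fullQ ρ c ℓ g (shM j i))] at this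
  obtain ⟨hb1, hb2⟩ := abs_le.1 hbad
  have h2d : (0 : ℝ) ≤ 2 * d := by positivity
  have hB' := mul_le_mul_of_nonneg_left hB h2d
  have hQ' := mul_le_mul_of_nonneg_left hQ h2d
  have hNd : (0 : ℝ) ≤ (N : ℝ) ^ d := by positivity
  have hε' := mul_le_mul_of_nonneg_right hℓ hNd
  have hrl : 0 ≤ 2 * d * (C * r ^ ℓ) * (N : ℝ) ^ d := by positivity
  have hτD : 0 ≤ 1 / τ * D := by positivity
  have hτN : 0 ≤ τ * (N : ℝ) ^ d := by positivity
  have hN1 : (0 : ℝ) ≤ (N : ℝ) ^ (d - 1) := by positivity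
  -- the total coefficients of the three error terms are at most `A`
  have hsum : d * (ℓ + 2) * (N : ℝ) ^ (d - 1) + (τ * (N : ℝ) ^ d + 1 / τ * D)
      + 2 * d * (N ^ d * (K * τ) + K * (1 / τ * ((ℓ + 1) * D)))
      ≤ (d * (ℓ + 2) + 1 + 2 * d * (K * (ℓ + 1))) * ((N : ℝ) ^ (d - 1) + τ * (N : ℝ) ^ d
          + 1 / τ * D) := by
    have p1 : (0 : ℝ) ≤ d * (ℓ + 2) := by positivity
    have p2 : (0 : ℝ) ≤ 2 * d * K * ℓ := by positivity
    have p3 : (0 : ℝ) ≤ 2 * d * K := by positivity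
    have q1 := mul_nonneg p1 hτD
    have q2 := mul_nonneg p1 hτN
    have q3 := mul_nonneg p2 hτN
    have q4 := mul_nonneg p2 hN1
    have q5 := mul_nonneg p3 hN1
    linarith
  rw [hX, hsplit]
  constructor
  · linarith
  · linarith

end Summation

/-! ### The cumulant generating function -/

section Phi

variable {ρ : ℝ} {d N : ℕ}

lemma dirichletD_nonneg (h0 : 0 < ρ) (h1 : ρ < 1) (c : ℕ) (g : ConfigD d N → ℝ) :
    0 ≤ dirichletD ρ c g := by
  rw [dirichletD_eq]
  exact Finset.sum_nonneg fun x _ => dsite_nonneg h0 h1 c g x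

/-- The variational formula at a fixed `N`, given the comparison of the escape rate with its mean:
the Dirichlet forms that appear as errors are absorbed by the one in the variational formula. -/
lemma phi_bound (h0 : 0 < ρ) (h1 : ρ < 1) (c : ℕ) {C₁ ε A τ lam : ℝ} (hε : 0 < ε)
    (hA : 0 < A) (hτ : 0 < τ)
    (hcore : ∀ g : ConfigD d N → ℝ, expectD ρ (fun η => g η ^ 2) = 1 →
      (expectD ρ (fun η => g η ^ 2 * escD ρ c η)
          - 2 * ρ * (1 - ρ) * (1 - ρ ^ (2 * d)) * (N : ℝ) ^ d
        ≤ ε * (N : ℝ) ^ d + A * ((N : ℝ) ^ (d - 1) + τ * (N : ℝ) ^ d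
          + 1 / τ * dirichletD ρ c g)) ∧
      (-(expectD ρ (fun η => g η ^ 2 * escD ρ c η)
          - 2 * ρ * (1 - ρ) * (1 - ρ ^ (2 * d)) * (N : ℝ) ^ d)
        ≤ ε * (N : ℝ) ^ d + A * ((N : ℝ) ^ (d - 1) + τ * (N : ℝ) ^ d
          + 1 / τ * dirichletD ρ c g)
          + C₁ * ((N : ℝ) ^ (d - c) * dirichletD ρ c g)))
    (hlam : -(1 / 2) ≤ Real.exp lam - 1)
    (hneg : -(Real.exp lam - 1) * (C₁ * (N : ℝ) ^ (d - c)) ≤ 1 / 4)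
    (hτA : 4 * A * |Real.exp lam - 1| ≤ τ) :
    |phiD ρ d N c lam - (Real.exp lam - 1) * (2 * ρ * (1 - ρ) * (1 - ρ ^ (2 * d))) * (N : ℝ) ^ d|
      ≤ |Real.exp lam - 1| * (ε * (N : ℝ) ^ d + A * ((N : ℝ) ^ (d - 1) + τ * (N : ℝ) ^ d)) := by
  set μ := Real.exp lam - 1 with hμ
  have hexp : Real.exp lam = 1 + μ := by rw [hμ]; ring
  set 𝔸 := 2 * ρ * (1 - ρ) * (1 - ρ ^ (2 * d))
  set R := ε * (N : ℝ) ^ d + A * ((N : ℝ) ^ (d - 1) + τ * (N : ℝ) ^ d) with hR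
  have hR0 : 0 ≤ R := by positivity
  have hup : ∀ x ∈ { x | ∃ f : ConfigD d N → ℝ, (∀ η, 0 ≤ f η) ∧ expectD ρ f = 1 ∧
      x = (Real.exp lam - 1) * expectD ρ (fun η => f η * escD ρ c η)
        - Real.exp lam * dirichletD ρ c (fun η => Real.sqrt (f η)) },
      x ≤ μ * 𝔸 * (N : ℝ) ^ d + |μ| * R := by
    rintro x ⟨f, hf0, hf1, rfl⟩
    have hsq : ∀ η, Real.sqrt (f η) ^ 2 = f η := fun η => Real.sq_sqrt (hf0 η)
    obtain ⟨c1, c2⟩ := hcore (fun η => Real.sqrt (f η)) (by simpa only [hsq] using hf1)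
    simp only [hsq] at c1 c2
    rw [← hμ, hexp]
    set D := dirichletD ρ c (fun η => Real.sqrt (f η)) with hD
    have hD0 : 0 ≤ D := dirichletD_nonneg h0 h1 c _
    set W := expectD ρ (fun η => f η * escD ρ c η)
    have hAD : |μ| * (A * (1 / τ * D)) ≤ 1 / 4 * D := by
      have : |μ| * A * (1 / τ) ≤ 1 / 4 := by
        rw [mul_one_div, div_le_iff₀ hτ]; linarith
      nlinarith [mul_le_mul_of_nonneg_right this hD0]
    rcases le_or_gt 0 μ with hm | hm
    · rw [abs_of_nonneg hm] at hAD ⊢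
      have := mul_le_mul_of_nonneg_left c1 hm
      have hμD : 0 ≤ μ * D := mul_nonneg hm hD0
      linarith
    · rw [abs_of_neg hm] at hAD ⊢
      have := mul_le_mul_of_nonneg_left c2 (neg_nonneg.2 hm.le)
      have hn := mul_le_mul_of_nonneg_right hneg hD0
      have hl := mul_le_mul_of_nonneg_right hlam hD0
      linarith
  have hone := hcore (fun _ => 1) (by simpa using expectD_one)
  have hD1 : dirichletD ρ c (fun _ : ConfigD d N => (1 : ℝ)) = 0 := by simp [dirichletD, expectD]
  rw [hD1] at hone
  simp only [one_pow, one_mul, mul_zero, add_zero] at hone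
  have hmem : μ * expectD ρ (fun η : ConfigD d N => escD ρ c η) ∈
      { x | ∃ f : ConfigD d N → ℝ, (∀ η, 0 ≤ f η) ∧ expectD ρ f = 1 ∧
      x = (Real.exp lam - 1) * expectD ρ (fun η => f η * escD ρ c η)
        - Real.exp lam * dirichletD ρ c (fun η => Real.sqrt (f η)) } :=
    ⟨fun _ => 1, fun _ => zero_le_one, expectD_one, by simp [hD1, ← hμ]⟩
  have hle : phiD ρ d N c lam ≤ μ * 𝔸 * (N : ℝ) ^ d + |μ| * R := csSup_le ⟨_, hmem⟩ hup
  have hge : μ * expectD ρ (fun η : ConfigD d N => escD ρ c η) ≤ phiD ρ d N c lam :=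
    le_csSup ⟨_, hup⟩ hmem
  have hge2 : -(|μ| * R) ≤ μ * expectD ρ (fun η : ConfigD d N => escD ρ c η)
      - μ * 𝔸 * (N : ℝ) ^ d := by
    have hx : |expectD ρ (fun η : ConfigD d N => escD ρ c η) - 𝔸 * (N : ℝ) ^ d| ≤ R :=
      abs_le.2 ⟨by linarith [hone.2], hone.1⟩
    have := mul_le_mul_of_nonneg_left hx (abs_nonneg μ)
    rw [← abs_mul] at this
    linarith [(abs_le.1 this).1]
  exact abs_le.2 ⟨by linarith, by linarith⟩

end Phi

/-- The full limit, of which the limit superior is a consequence. -/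
lemma phi_tendsto (ρ : ℝ) (h0 : 0 < ρ) (h1 : ρ < 1) (d c : ℕ) (hc : c + 1 ≤ d) [NeZero d] :
    ∃ α₀ : ℝ, α₀ < 0 ∧ ∀ α : ℝ, α₀ < α →
      Tendsto (fun N : ℕ => phiD ρ d N c (α / (N : ℝ) ^ (d - c)) / (N : ℝ) ^ c) atTop
        (nhds (2 * ρ * (1 - ρ) * (1 - ρ ^ (2 * d)) * α)) := by
  obtain ⟨C₁, hC₁, hcore⟩ := core_est (d := d) h0 h1 c hc
  refine ⟨-(1 / (4 * C₁)), by rw [neg_lt_zero]; positivity, fun α hα => ?_⟩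
  set 𝔸 := 2 * ρ * (1 - ρ) * (1 - ρ ^ (2 * d)) with h𝔸
  set lam : ℕ → ℝ := fun N => α / (N : ℝ) ^ (d - c) with hlam
  set μ : ℕ → ℝ := fun N => Real.exp (lam N) - 1 with hμ
  set β : ℕ → ℝ := fun N => μ N * (N : ℝ) ^ (d - c) with hβ
  have hlam0 : Tendsto lam atTop (nhds 0) :=
    ((tendsto_pow_atTop (by omega)).comp tendsto_natCast_atTop_atTop).const_div_atTop α
  have hμ0 : Tendsto μ atTop (nhds 0) := by
    have := ((Real.continuous_exp.tendsto 0).comp hlam0).sub_const 1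
    simpa using this
  have hinv : Tendsto (fun N : ℕ => 1 / (N : ℝ)) atTop (nhds 0) :=
    tendsto_one_div_atTop_nhds_zero_nat
  have hβα : Tendsto β atTop (nhds α) := by
    rw [tendsto_iff_dist_tendsto_zero]
    have hb : Tendsto (fun N => |lam N| * |α|) atTop (nhds 0) := by
      simpa using hlam0.abs.mul_const |α|
    refine squeeze_zero' (Eventually.of_forall fun N => dist_nonneg) ?_ hb
    have hl1 : ∀ᶠ N in atTop, |lam N| < 1 := by
      have := hlam0.abs
      rw [abs_zero] at this
      exact this.eventually (gt_mem_nhds zero_lt_one)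
    filter_upwards [hl1, eventually_gt_atTop 0] with N hl hN
    have hN' : (0 : ℝ) < (N : ℝ) ^ (d - c) := by positivity
    have hα' : lam N * (N : ℝ) ^ (d - c) = α := by simp only [hlam]; field_simp
    have h2 := Real.abs_exp_sub_one_sub_id_le hl.le
    rw [Real.dist_eq]
    calc |β N - α| = |Real.exp (lam N) - 1 - lam N| * (N : ℝ) ^ (d - c) := by
          have : β N - α = (Real.exp (lam N) - 1 - lam N) * (N : ℝ) ^ (d - c) := by
            simp only [hβ, hμ]; linear_combination hα'
          rw [this, abs_mul, abs_of_pos hN']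
      _ ≤ lam N ^ 2 * (N : ℝ) ^ (d - c) := by gcongr
      _ = lam N * α := by rw [sq, mul_assoc, hα']
      _ ≤ |lam N| * |α| := by rw [← abs_mul]; exact le_abs_self _
  suffices h : Tendsto (fun N : ℕ => phiD ρ d N c (lam N) / (N : ℝ) ^ c - β N * 𝔸) atTop
      (nhds 0) by
    have := h.add (hβα.mul_const 𝔸)
    simp only [sub_add_cancel, zero_add] at this
    rwa [mul_comm α] at this
  rw [Metric.tendsto_atTop']
  intro δ hδ
  obtain ⟨A, hA, hcA⟩ := hcore (δ / (|α| + 1)) (by positivity)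
  set ε := δ / (|α| + 1) with hε
  have hε0 : 0 < ε := by positivity
  set τ : ℕ → ℝ := fun N => 4 * A * |μ N| + 1 / (N : ℝ) with hτ
  have hτ0 : Tendsto τ atTop (nhds 0) := by
    have := (hμ0.abs.const_mul (4 * A)).add hinv
    rwa [abs_zero, mul_zero, add_zero] at this
  have hlim : Tendsto (fun N => |β N| * (ε + A * (1 / (N : ℝ) + τ N))) atTop
      (nhds (|α| * (ε + A * (0 + 0)))) :=
    hβα.abs.mul (((hinv.add hτ0).const_mul A).const_add ε)
  have hlt : |α| * (ε + A * (0 + 0)) < δ := by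
    have : ε * (|α| + 1) = δ := by rw [hε]; field_simp
    nlinarith [abs_nonneg α]
  have hev : ∀ᶠ N : ℕ in atTop,
      dist (phiD ρ d N c (lam N) / (N : ℝ) ^ c - β N * 𝔸) 0 < δ := by
    filter_upwards [hlim.eventually (gt_mem_nhds hlt), eventually_gt_atTop 0,
      hμ0.eventually (lt_mem_nhds (show (-(1 / 2) : ℝ) < 0 by norm_num))] with N hN1 hN0 hN2
    have hNp : (0 : ℝ) < N := by exact_mod_cast hN0
    have hτN : 0 < τ N := by simp only [hτ]; positivity
    have hneg : -(Real.exp (lam N) - 1) * (C₁ * (N : ℝ) ^ (d - c)) ≤ 1 / 4 := by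
      have a1 : -(Real.exp (lam N) - 1) ≤ -lam N := by linarith [Real.add_one_le_exp (lam N)]
      have a2 := mul_le_mul_of_nonneg_right a1
        (show 0 ≤ C₁ * (N : ℝ) ^ (d - c) by positivity)
      have a3 : -lam N * (C₁ * (N : ℝ) ^ (d - c)) = -α * C₁ := by
        simp only [hlam]; field_simp
      have a4 : -α * C₁ ≤ 1 / 4 := by
        have := mul_le_mul_of_nonneg_right (neg_lt.1 hα).le hC₁.le
        have e : 1 / (4 * C₁) * C₁ = 1 / 4 := by field_simp
        linarith
      linarith
    have hb := phi_bound h0 h1 c hε0 hA hτN (fun g hg => hcA N g hg (τ N) hτN) hN2.le hneg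
      (by simp only [hτ, hμ]; linarith [one_div_pos.2 hNp])
    rw [Real.dist_eq, sub_zero]
    refine lt_of_le_of_lt ?_ hN1
    have hNc : (0 : ℝ) < (N : ℝ) ^ c := by positivity
    have hNdc : (0 : ℝ) < (N : ℝ) ^ (d - c) := by positivity
    have hpow : (N : ℝ) ^ d = (N : ℝ) ^ c * (N : ℝ) ^ (d - c) := by
      rw [← pow_add]; congr 1; omega
    have hpow1 : (N : ℝ) ^ (d - 1) = (N : ℝ) ^ d * (1 / (N : ℝ)) := by
      obtain ⟨k, rfl⟩ : ∃ k, d = k + 1 := ⟨d - 1, by omega⟩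
      rw [Nat.add_sub_cancel, pow_succ]; field_simp
    have e1 : phiD ρ d N c (lam N) / (N : ℝ) ^ c - β N * 𝔸
        = (phiD ρ d N c (lam N) - (Real.exp (lam N) - 1) * 𝔸 * (N : ℝ) ^ d) / (N : ℝ) ^ c := by
      rw [hpow]; simp only [hβ, hμ]; field_simp
    rw [e1, abs_div, abs_of_pos hNc, div_le_iff₀ hNc]
    refine hb.trans (le_of_eq ?_)
    rw [hpow1, hpow]
    simp only [hβ, hμ]
    rw [abs_mul, abs_of_pos hNdc]
    ring
  obtain ⟨n, hn⟩ := eventually_atTop.1 hev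
  exact ⟨n, fun N hN => hn N hN.le⟩

/-- **Theorem 2.4** (generating-function part; active-regime linearity for FA-1f
in dimension `d ≥ 2`). For the FA-1f model on `Λ_N^d` at density `ρ ∈ (0,1)` with
boundary condition of dimension `c ∈ {0,…,d−1}`, there exists `α₀ < 0` such that
for every `α > α₀`:
`limsup_{N→∞} N^{−c}·φ^{(N)}(α/N^{d−c}) = 𝔸·α`, with `𝔸 = 2ρ(1−ρ)(1−ρ^{2d})` the
mean instantaneous activity at an interior site. -/
theorem active_regime_linearity_highdim (ρ : ℝ) (hρ0 : 0 < ρ) (hρ1 : ρ < 1)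
    (d c : ℕ) (hd : 2 ≤ d) (hc : c ≤ d - 1) :
    ∃ α₀ : ℝ, α₀ < 0 ∧ ∀ α : ℝ, α₀ < α →
      Filter.limsup
          (fun N : ℕ => phiD ρ d N c (α / (N : ℝ) ^ (d - c)) / (N : ℝ) ^ c)
          Filter.atTop
        = 2 * ρ * (1 - ρ) * (1 - ρ ^ (2 * d)) * α := by
  have : NeZero d := ⟨by omega⟩
  obtain ⟨α₀, hα₀, h⟩ := phi_tendsto ρ hρ0 hρ1 d c (by omega)
  exact ⟨α₀, hα₀, fun α hα => (h α hα).limsup_eq⟩
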